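/- arXiv:2109.09877 — 2 statements merged into one kernel-verified Lean document; each statement's English description precedes it below -/
import Mathlib

section
/- Let p > 3 be a prime. Then the rational number ∑_{n=0}^{(p-1)/2} (6n+1)/256^n · C(2n,n)^3 is congruent to (-1)^{(p-1)/2} · p + (-1)^{(p-1)/2} · (7/24) · p^4 · B_{p-3} modulo p^5 (as rational numbers). -/
/-- Two rationals `a` and `b` are congruent modulo `p^r`:
the `p`-adic valuation of `a - b` is at least `r`, i.e. `a - b = c * p^r`
with the denominator of `c` not divisible by `p`. -/
def ratCongr (p r : ℕ) (a b : ℚ) : Prop :=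
  ∃ c : ℚ, a - b = c * (p : ℚ) ^ r ∧ ¬ (p ∣ c.den)

/-- The Fermat quotient `q_p(2) = (2^(p-1) - 1)/p` (an integer for odd primes),
viewed as a rational number. -/
def fermatQ (p : ℕ) : ℚ := ((2 : ℚ) ^ (p - 1) - 1) / p

/-!
Put a parameter `u` into the summand so that the sum at `u = 0` is the one sought and the
Wilf–Zeilberger method relates the sums at `u` and `u + 4`. At odd `u = 2m + 1` the deformed sum
terminates and telescoping evaluates it to `(-1)ᵐ(2m + 1)`. After clearing denominators the sum over
`k ≤ n` is a polynomial in `u²` of degree at most `n`, so its value at `u = 0` is recovered by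
Lagrange interpolation from the `n + 1` nodes `1², 3², …, (2n + 1)²`.

Let `p = 2n + 1`. The node `p²` carries the main term. The values at the other nodes agree with it
modulo a relative error `p`, and their Lagrange weights are divisible by `p²`, since these nodes
are the `n`-th roots of unity modulo `p`. This leaves a correction of relative order `p³`, which is
computed in `ZMod p`: the errors are values of a step-four harmonic function, hence of Faulhaber
polynomials, and pairing these with power sums over `ZMod p` leaves the single Bernoulli number
`B (p - 3)`.
-/

open Finset

section SqDiffProd

variable {R : Type*} [CommRing R]

/-- The product `∏ i < n, ((a + 2hi)² - u²)`. Both Pochhammer products of the deformed summand are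
of this form: `1, 3, 5, …` (`a = 1`, `h = 1`) in the numerator and `4, 8, 12, …` (`a = 4`, `h = 2`)
in the denominator. -/
def sqDiffProd (a h u : R) (n : ℕ) : R := ∏ i ∈ range n, ((a + 2 * h * i) ^ 2 - u ^ 2)

lemma sqDiffProd_succ (a h u : R) (n : ℕ) :
    sqDiffProd a h u (n + 1) = sqDiffProd a h u n * ((a + 2 * h * n) ^ 2 - u ^ 2) :=
  prod_range_succ _ _

lemma sqDiffProd_neg (a h u : R) (n : ℕ) : sqDiffProd a h (-u) n = sqDiffProd a h u n := by
  simp only [sqDiffProd, neg_sq]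

/-- Factoring differences of squares, the shift `(a, u) ↦ (a + h, u + h)` fixes the factors
`a + 2hi - u` and moves the factors `a + 2hi + u` one step forward. -/
lemma sqDiffProd_shift (a h u : R) (n : ℕ) :
    sqDiffProd (a + h) h (u + h) n * (a + u) = sqDiffProd a h u n * (a + u + 2 * h * n) := by
  induction n with
  | zero => simp [sqDiffProd]
  | succ n ih =>
    rw [sqDiffProd_succ, sqDiffProd_succ]
    push_cast
    linear_combination ((a + h + 2 * h * n) ^ 2 - (u + h) ^ 2) * ih

lemma sqDiffProd_odd_add_four (u : R) (n : ℕ) :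
    sqDiffProd 1 1 (u + 4) n * ((u + 1) * (u + 3)) =
      sqDiffProd (-1) 1 (u + 2) n * ((2 * n + 1 + u) * (2 * n + 3 + u)) := by
  have h₁ := sqDiffProd_shift (-1) 1 (u + 2) n
  have h₂ := sqDiffProd_shift (-1 + 1) 1 (u + 2 + 1) n
  rw [show (-1 + 1 + 1 : R) = 1 by ring, show u + 2 + 1 + 1 = u + 4 by ring] at h₂
  linear_combination (u + 1) * h₂ + (2 * n + 3 + u) * h₁

lemma sqDiffProd_odd (u : R) (n : ℕ) :
    sqDiffProd 1 1 u n * ((u + 1) * (u + 3)) =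
      sqDiffProd (-1) 1 (u + 2) n * ((2 * n - 1 - u) * (2 * n - 3 - u)) := by
  have h := sqDiffProd_odd_add_four (-u - 4) n
  rw [show -u - 4 + 4 = -u by ring, show -u - 4 + 2 = -(u + 2) by ring, sqDiffProd_neg,
    sqDiffProd_neg] at h
  linear_combination h

lemma sqDiffProd_four_add_four (u : R) (n : ℕ) :
    sqDiffProd 4 2 (u + 4) n * (u + 4) = sqDiffProd 2 2 (u + 2) n * (u + 4 + 4 * n) := by
  have h := sqDiffProd_shift 2 2 (u + 2) n
  rw [show (2 + 2 : R) = 4 by norm_num, show u + 2 + 2 = u + 4 by ring] at h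
  linear_combination h

lemma sqDiffProd_four (u : R) (n : ℕ) :
    sqDiffProd 4 2 u n * u = sqDiffProd 2 2 (u + 2) n * (u - 4 * n) := by
  have h := sqDiffProd_four_add_four (-u - 4) n
  rw [show -u - 4 + 4 = -u by ring, show -u - 4 + 2 = -(u + 2) by ring, sqDiffProd_neg,
    sqDiffProd_neg] at h
  linear_combination -h

lemma sqDiffProd_four_recurrence (u : R) (n : ℕ) :
    sqDiffProd 4 2 (u + 4) n * (u + 4) * (u - 4 * n) =
      sqDiffProd 4 2 u n * u * (u + 4 + 4 * n) := by
  linear_combination (u - 4 * n) * sqDiffProd_four_add_four u n -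
    (u + 4 + 4 * n) * sqDiffProd_four u n

lemma sqDiffProd_ne_zero_of_odd {a h u : ℤ} (ha : Even a) (hu : Odd u) (n : ℕ) :
    sqDiffProd (a : ℚ) h u n ≠ 0 := by
  refine prod_ne_zero_iff.mpr fun i _ hi => ?_
  have hsq : (a + 2 * h * i) ^ 2 = u ^ 2 := by exact_mod_cast sub_eq_zero.mp hi
  have heven : Even ((a + 2 * h * i) ^ 2) :=
    (ha.add ((even_two_mul h).mul_right i)).pow_of_ne_zero two_ne_zero
  exact Int.not_even_iff_odd.mpr hu.pow (hsq ▸ heven)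

end SqDiffProd

section WilfZeilberger

/-- The normalised central binomial coefficient `C(2n, n) / 4 ^ n`. -/
def centralRatio (n : ℕ) : ℚ := (n.centralBinom : ℚ) / 4 ^ n

lemma centralRatio_succ (n : ℕ) :
    centralRatio (n + 1) * (2 * (n + 1)) = centralRatio n * (2 * n + 1) := by
  have h : ((n : ℚ) + 1) * (n + 1).centralBinom = 2 * (2 * n + 1) * n.centralBinom := by
    exact_mod_cast n.succ_mul_centralBinom_succ
  unfold centralRatio
  field_simp
  rw [pow_succ]
  linear_combination (2 * 4 ^ n : ℚ) * h

/-- The summand deformed by the parameter `u`; at `u = 0` it is the summand of the theorem. -/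
def deformedTerm (u : ℚ) (k : ℕ) : ℚ :=
  (6 * k + 1) * centralRatio k * sqDiffProd 1 1 u k / sqDiffProd 4 2 u k

lemma sqDiffProd_odd_zero (k : ℕ) :
    sqDiffProd (1 : ℚ) 1 0 k = (centralRatio k * (2 ^ k * k.factorial)) ^ 2 := by
  induction k with
  | zero => simp [sqDiffProd, centralRatio]
  | succ k ih =>
    rw [sqDiffProd_succ, ih, pow_succ 2 k, Nat.factorial_succ]
    push_cast
    linear_combination -(2 ^ k * (k.factorial : ℚ)) ^ 2 *
      (centralRatio (k + 1) * (2 * (k + 1)) + centralRatio k * (2 * k + 1)) * centralRatio_succ k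

lemma sqDiffProd_four_zero (k : ℕ) :
    sqDiffProd (4 : ℚ) 2 0 k = (4 ^ k * k.factorial) ^ 2 := by
  induction k with
  | zero => simp [sqDiffProd]
  | succ k ih =>
    rw [sqDiffProd_succ, ih, pow_succ 4 k, Nat.factorial_succ]
    push_cast
    ring

lemma deformedTerm_zero (k : ℕ) :
    deformedTerm 0 k = (6 * (k : ℚ) + 1) / 256 ^ k * ((2 * k).choose k : ℚ) ^ 3 := by
  have : (k.factorial : ℚ) ≠ 0 := by positivity
  rw [deformedTerm, sqDiffProd_odd_zero, sqDiffProd_four_zero, centralRatio, Nat.centralBinom,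
    show (256 : ℚ) = 4 ^ 4 by norm_num, show (4 : ℚ) = 2 * 2 by norm_num, ← pow_mul]
  simp only [mul_pow]
  field_simp
  ring

/-- The Wilf–Zeilberger mate of `deformedTerm`, for the shift `u ↦ u + 4`. -/
def wzCertificate (u : ℚ) (k : ℕ) : ℚ :=
  -8 * k * (2 * k - 1) * centralRatio k * sqDiffProd (-1) 1 (u + 2) k /
    ((u + 1) * (u + 3) * sqDiffProd 2 2 (u + 2) k)

lemma deformedTerm_add_four_sub {u : ℚ} {k : ℕ} (h₁ : u + 1 ≠ 0) (h₃ : u + 3 ≠ 0)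
    (hk : sqDiffProd 2 2 (u + 2) (k + 1) ≠ 0) (h₄ : u + 4 ≠ 0) (h₀ : u ≠ 0) :
    deformedTerm (u + 4) k / (u + 4) - deformedTerm u k / u =
      wzCertificate u (k + 1) - wzCertificate u k := by
  rw [sqDiffProd_succ, show (2 + 2 * 2 * (k : ℚ)) ^ 2 - (u + 2) ^ 2 =
    -((u - k * 4) * (u + 4 + k * 4)) by ring] at hk
  obtain ⟨hB, hu⟩ := mul_ne_zero_iff.mp hk
  obtain ⟨hu₁, hu₂⟩ := mul_ne_zero_iff.mp (neg_ne_zero.mp hu)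
  have hodd₄ := eq_div_of_mul_eq (mul_ne_zero h₁ h₃) (sqDiffProd_odd_add_four u k)
  have hodd := eq_div_of_mul_eq (mul_ne_zero h₁ h₃) (sqDiffProd_odd u k)
  have hfour₄ := eq_div_of_mul_eq h₄ (sqDiffProd_four_add_four u k)
  have hfour := eq_div_of_mul_eq h₀ (sqDiffProd_four u k)
  have hr := eq_div_of_mul_eq (by positivity) (centralRatio_succ k)
  rw [deformedTerm, deformedTerm, wzCertificate, wzCertificate, hodd₄, hodd, hfour₄, hfour,
    sqDiffProd_succ, sqDiffProd_succ, hr, show (2 + 2 * 2 * (k : ℚ)) ^ 2 - (u + 2) ^ 2 =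
      -((u - k * 4) * (u + 4 + k * 4)) by ring]
  push_cast
  rw [mul_comm 4 (k : ℚ)]
  field_simp
  ring

lemma sqDiffProd_odd_eq_zero {m k : ℕ} (h : m < k) : sqDiffProd (1 : ℚ) 1 (2 * m + 1) k = 0 :=
  prod_eq_zero (mem_range.mpr h) (by ring)

lemma wzCertificate_odd_eq_zero {m n : ℕ} (h : m + 2 < n) : wzCertificate (2 * m + 1) n = 0 := by
  have hprod : sqDiffProd (-1 : ℚ) 1 (2 * m + 1 + 2) n = 0 :=
    prod_eq_zero (mem_range.mpr h) (by push_cast; ring)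
  rw [wzCertificate, hprod, mul_zero, zero_div]

lemma sum_deformedTerm_odd_add_four {m n : ℕ} (h : m + 2 < n) :
    (∑ k ∈ range n, deformedTerm (2 * m + 1 + 4) k) / (2 * m + 1 + 4) =
      (∑ k ∈ range n, deformedTerm (2 * m + 1) k) / (2 * m + 1) := by
  have hstep (k : ℕ) : deformedTerm (2 * m + 1 + 4) k / (2 * m + 1 + 4) -
      deformedTerm (2 * m + 1) k / (2 * m + 1) =
      wzCertificate (2 * m + 1) (k + 1) - wzCertificate (2 * m + 1) k := by
    have hB := sqDiffProd_ne_zero_of_odd (a := 2) (h := 2) (u := 2 * m + 1 + 2) even_two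
      ⟨m + 1, by ring⟩ (k + 1)
    push_cast at hB
    exact deformedTerm_add_four_sub (by positivity) (by positivity) hB (by positivity)
      (by positivity)
  rw [← sub_eq_zero, sum_div, sum_div, ← sum_sub_distrib, sum_congr rfl fun k _ => hstep k,
    sum_range_sub, wzCertificate_odd_eq_zero h]
  simp [wzCertificate]

lemma sum_deformedTerm_odd {m n : ℕ} (h : m < n) :
    ∑ k ∈ range n, deformedTerm (2 * m + 1) k = (-1) ^ m * (2 * m + 1) := by
  have htrunc {m : ℕ} (h : m < n) : ∑ k ∈ range n, deformedTerm (2 * m + 1) k =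
      ∑ k ∈ range (m + 1), deformedTerm (2 * m + 1) k := by
    refine (sum_subset (range_mono h) fun k _ hk => ?_).symm
    rw [deformedTerm, sqDiffProd_odd_eq_zero (by simpa using hk), mul_zero, zero_div]
  induction m using Nat.twoStepInduction with
  | zero => rw [htrunc h]; simp [deformedTerm, sqDiffProd, centralRatio]
  | one =>
    rw [htrunc h]
    norm_num [sum_range_succ, deformedTerm, sqDiffProd, centralRatio, Nat.centralBinom, Nat.choose]
  | more m ih _ =>
    have hm : (2 * m + 1 : ℚ) ≠ 0 := by positivity
    have hm' : (2 * m + 1 + 4 : ℚ) ≠ 0 := by positivity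
    have hstep := sum_deformedTerm_odd_add_four h
    rw [ih (by omega), mul_div_cancel_right₀ _ hm, div_eq_iff hm'] at hstep
    push_cast
    rw [show (2 * (m + 2) + 1 : ℚ) = 2 * m + 1 + 4 by ring, hstep, pow_add]
    ring

end WilfZeilberger

section Interpolation

open Polynomial

/-- The polynomial in `u²` obtained from `∑ k ≤ n, deformedTerm u k` by clearing denominators. -/
noncomputable def clearedSum (n : ℕ) : ℚ[X] :=
  ∑ k ∈ range (n + 1), C ((6 * (k : ℚ) + 1) * centralRatio k) *
    ((∏ i ∈ range k, (C ((1 + 2 * 1 * (i : ℚ)) ^ 2) - X)) *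
      ∏ i ∈ Ico k n, (C ((4 + 2 * 2 * (i : ℚ)) ^ 2) - X))

lemma natDegree_prod_C_sub_X_le {R ι : Type*} [CommRing R] (s : Finset ι) (f : ι → R) :
    (∏ i ∈ s, (C (f i) - X)).natDegree ≤ #s := by
  refine (natDegree_prod_le _ _).trans (sum_le_card_nsmul _ _ 1 fun i _ => ?_) |>.trans (by simp)
  exact (natDegree_sub_le _ _).trans (by simp [natDegree_X_le])

lemma natDegree_clearedSum_le (n : ℕ) : (clearedSum n).natDegree ≤ n := by
  refine natDegree_sum_le_of_forall_le _ _ fun k hk => (natDegree_C_mul_le _ _).trans ?_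
  refine (natDegree_mul_le_of_le (natDegree_prod_C_sub_X_le _ _)
    (natDegree_prod_C_sub_X_le _ _)).trans ?_
  rw [card_range, Nat.card_Ico]
  exact (Nat.add_sub_of_le (mem_range_succ_iff.mp hk)).le

lemma eval_clearedSum {u : ℚ} {n : ℕ} (h : sqDiffProd 4 2 u n ≠ 0) :
    (clearedSum n).eval (u ^ 2) =
      (∑ k ∈ range (n + 1), deformedTerm u k) * sqDiffProd 4 2 u n := by
  rw [clearedSum, eval_finsetSum, sum_mul]
  refine sum_congr rfl fun k hk => ?_
  have hsplit : sqDiffProd 4 2 u n =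
      sqDiffProd 4 2 u k * ∏ i ∈ Ico k n, ((4 + 2 * 2 * (i : ℚ)) ^ 2 - u ^ 2) :=
    (prod_range_mul_prod_Ico _ (mem_range_succ_iff.mp hk)).symm
  have hk₀ : sqDiffProd 4 2 u k ≠ 0 := left_ne_zero_of_mul (hsplit ▸ h)
  simp only [eval_mul, eval_C, eval_prod, eval_sub, eval_X]
  rw [hsplit, deformedTerm, ← sqDiffProd]
  field_simp

lemma injOn_odd_sq (s : Set ℕ) : Set.InjOn (fun j : ℕ => (2 * (j : ℚ) + 1) ^ 2) s := by
  intro i _ j _ hij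
  have h : 2 * (i : ℚ) + 1 = 2 * j + 1 := by
    rwa [← sq_eq_sq₀ (by positivity) (by positivity)]
  exact_mod_cast mul_left_cancel₀ two_ne_zero (add_right_cancel h)

/-- The value of `clearedSum n` at the node `(2m + 1)²`, for `m ≤ n`. -/
def nodeValue (n m : ℕ) : ℚ := (-1) ^ m * (2 * m + 1) * sqDiffProd (4 : ℚ) 2 (2 * m + 1) n

lemma sqDiffProd_four_odd_ne_zero (n m : ℕ) : sqDiffProd (4 : ℚ) 2 (2 * m + 1) n ≠ 0 := by
  have h := sqDiffProd_ne_zero_of_odd (a := 4) (h := 2) (u := 2 * m + 1) ⟨2, rfl⟩ ⟨m, rfl⟩ n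
  push_cast at h
  exact h

lemma sqDiffProd_four_zero_ne_zero (n : ℕ) : sqDiffProd (4 : ℚ) 2 0 n ≠ 0 := by
  rw [sqDiffProd_four_zero]
  positivity

lemma eval_clearedSum_odd_sq {n m : ℕ} (h : m ≤ n) :
    (clearedSum n).eval ((2 * (m : ℚ) + 1) ^ 2) = nodeValue n m := by
  rw [eval_clearedSum (sqDiffProd_four_odd_ne_zero n m), sum_deformedTerm_odd (by omega),
    nodeValue]

/-- The value at `0` of the Lagrange basis polynomial of the node `(2m + 1)²` among the
nodes `1², 3², …, (2n + 1)²`. -/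
noncomputable def lagrangeWeight (n m : ℕ) : ℚ :=
  (Lagrange.basis (range (n + 1)) (fun j : ℕ => (2 * (j : ℚ) + 1) ^ 2) m).eval 0

lemma sum_lagrangeWeight (n : ℕ) : ∑ m ∈ range (n + 1), lagrangeWeight n m = 1 := by
  have h := congrArg (eval 0) (Lagrange.sum_basis (injOn_odd_sq (range (n + 1)))
    nonempty_range_add_one)
  rwa [eval_finsetSum, eval_one] at h

lemma sum_deformedTerm_zero_mul (n : ℕ) :
    (∑ k ∈ range (n + 1), deformedTerm 0 k) * sqDiffProd 4 2 0 n =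
      ∑ m ∈ range (n + 1), nodeValue n m * lagrangeWeight n m := by
  have hdeg : (clearedSum n).degree < #(range (n + 1)) := by
    rw [card_range]
    exact degree_le_natDegree.trans_lt
      (by exact_mod_cast Nat.lt_succ_of_le (natDegree_clearedSum_le n))
  have hinterp := Lagrange.eq_interpolate_of_eval_eq (nodeValue n) (injOn_odd_sq _) hdeg
    fun m hm => eval_clearedSum_odd_sq (mem_range_succ_iff.mp hm)
  rw [← eval_clearedSum (sqDiffProd_four_zero_ne_zero n), zero_pow two_ne_zero, hinterp,
    Lagrange.interpolate_apply, eval_finsetSum]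
  simp only [eval_mul, eval_C, lagrangeWeight]

/-- If the node values are `nodeValue n n * (1 + t * a m)`, interpolation at `0` reads off the
deviations `a m` against the weights, because the weights sum to `1`. -/
lemma sum_deformedTerm_zero_mul_of_nodeValue {n : ℕ} {t : ℚ} {a : ℕ → ℚ}
    (h : ∀ m < n, nodeValue n m = nodeValue n n * (1 + t * a m)) :
    (∑ k ∈ range (n + 1), deformedTerm 0 k) * sqDiffProd 4 2 0 n =
      nodeValue n n * (1 + t * ∑ m ∈ range n, a m * lagrangeWeight n m) := by
  have hweights := sum_lagrangeWeight n
  rw [sum_range_succ] at hweights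
  have hsum : ∑ m ∈ range n, nodeValue n m * lagrangeWeight n m = nodeValue n n *
      (∑ m ∈ range n, lagrangeWeight n m + t * ∑ m ∈ range n, a m * lagrangeWeight n m) := by
    rw [mul_sum _ _ t, ← sum_add_distrib, mul_sum]
    refine sum_congr rfl fun m hm => ?_
    rw [h m (mem_range.mp hm)]
    ring
  rw [sum_deformedTerm_zero_mul, sum_range_succ, hsum]
  linear_combination nodeValue n n * hweights

lemma nodeValue_add_two (n m : ℕ) :
    nodeValue n (m + 2) * (2 * m + 3 - 2 * (2 * n + 1)) =
      nodeValue n m * (2 * m + 3 + 2 * (2 * n + 1)) := by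
  have h := sqDiffProd_four_recurrence (2 * m + 1 : ℚ) n
  rw [show (2 * m + 1 + 4 : ℚ) = 2 * (m + 2) + 1 by ring] at h
  simp only [nodeValue, pow_add]
  push_cast
  linear_combination (-1) ^ m * h

lemma nodeValue_one (n : ℕ) :
    nodeValue n 1 * (1 - 2 * (2 * n + 1)) = nodeValue n 0 * (1 + 2 * (2 * n + 1)) := by
  have h := sqDiffProd_four_recurrence (-1 : ℚ) n
  rw [sqDiffProd_neg, show (-1 + 4 : ℚ) = 3 by norm_num] at h
  norm_num [nodeValue]
  linear_combination -h

end Interpolation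

section Reduction

variable (p : ℕ) [Fact p.Prime]

/-- The graph of reduction modulo `p`: the pairs of a rational `x` whose denominator is prime
to `p` and its residue in `ZMod p`. -/
def reductionGraph : Subring (ℚ × ZMod p) where
  carrier := {z | (z.1.den : ZMod p) ≠ 0 ∧ (z.1 : ZMod p) = z.2}
  mul_mem' := by
    rintro ⟨x, _⟩ ⟨y, _⟩ ⟨hx : (x.den : ZMod p) ≠ 0, rfl : (x : ZMod p) = _⟩
      ⟨hy : (y.den : ZMod p) ≠ 0, rfl : (y : ZMod p) = _⟩
    refine ⟨fun (h : ((x * y).den : ZMod p) = 0) => mul_ne_zero hx hy ?_,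
      Rat.cast_mul_of_ne_zero hx hy⟩
    have hdvd := Nat.cast_dvd_cast (α := ZMod p) (Rat.mul_den_dvd x y)
    rwa [Nat.cast_mul, h, zero_dvd_iff] at hdvd
  one_mem' := by simp
  add_mem' := by
    rintro ⟨x, _⟩ ⟨y, _⟩ ⟨hx : (x.den : ZMod p) ≠ 0, rfl : (x : ZMod p) = _⟩
      ⟨hy : (y.den : ZMod p) ≠ 0, rfl : (y : ZMod p) = _⟩
    refine ⟨fun (h : ((x + y).den : ZMod p) = 0) => mul_ne_zero hx hy ?_,
      Rat.cast_add_of_ne_zero hx hy⟩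
    have hdvd := Nat.cast_dvd_cast (α := ZMod p) (Rat.add_den_dvd x y)
    rwa [Nat.cast_mul, h, zero_dvd_iff] at hdvd
  zero_mem' := by simp
  neg_mem' := by
    rintro ⟨x, _⟩ ⟨hx : (x.den : ZMod p) ≠ 0, rfl : (x : ZMod p) = _⟩
    exact ⟨by simpa using hx, Rat.cast_neg x⟩

/-- The subring of `p`-integral rationals. -/
def integersAt : Subring ℚ := (reductionGraph p).map (RingHom.fst ℚ (ZMod p))

variable {p}

/-- The rational `x` is `p`-integral, with residue `a` modulo `p`. -/
def ReducesTo (x : ℚ) (a : ZMod p) : Prop := (x, a) ∈ reductionGraph p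

lemma mem_integersAt {x : ℚ} : x ∈ integersAt p ↔ ∃ a : ZMod p, ReducesTo x a := by
  simp [integersAt, ReducesTo]

lemma not_dvd_den_of_mem_integersAt {x : ℚ} (h : x ∈ integersAt p) : ¬ p ∣ x.den := by
  obtain ⟨a, ha⟩ := mem_integersAt.mp h
  rw [← ZMod.natCast_eq_zero_iff]
  exact ha.1

namespace ReducesTo

variable {x y : ℚ} {a b : ZMod p}

lemma mem_integersAt (hx : ReducesTo x a) : x ∈ integersAt p := _root_.mem_integersAt.mpr ⟨a, hx⟩

lemma unique (hx : ReducesTo x a) (hx' : ReducesTo x b) : a = b := hx.2.symm.trans hx'.2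

lemma intCast (z : ℤ) : ReducesTo (z : ℚ) (z : ZMod p) := intCast_mem (reductionGraph p) z

lemma natCast (n : ℕ) : ReducesTo (n : ℚ) (n : ZMod p) := natCast_mem (reductionGraph p) n

lemma ofNat (n : ℕ) [n.AtLeastTwo] : ReducesTo (OfNat.ofNat n : ℚ) (OfNat.ofNat n : ZMod p) :=
  natCast n

lemma zero : ReducesTo 0 (0 : ZMod p) := zero_mem (reductionGraph p)

lemma one : ReducesTo 1 (1 : ZMod p) := one_mem (reductionGraph p)

lemma self : ReducesTo (p : ℚ) (0 : ZMod p) := by simpa using natCast (p := p) p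

lemma add (hx : ReducesTo x a) (hy : ReducesTo y b) : ReducesTo (x + y) (a + b) := add_mem hx hy

lemma sub (hx : ReducesTo x a) (hy : ReducesTo y b) : ReducesTo (x - y) (a - b) := sub_mem hx hy

lemma neg (hx : ReducesTo x a) : ReducesTo (-x) (-a) := neg_mem hx

lemma mul (hx : ReducesTo x a) (hy : ReducesTo y b) : ReducesTo (x * y) (a * b) := mul_mem hx hy

lemma pow (hx : ReducesTo x a) (n : ℕ) : ReducesTo (x ^ n) (a ^ n) := pow_mem hx n

lemma sum {ι : Type*} {s : Finset ι} {f : ι → ℚ} {g : ι → ZMod p}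
    (h : ∀ i ∈ s, ReducesTo (f i) (g i)) : ReducesTo (∑ i ∈ s, f i) (∑ i ∈ s, g i) := by
  rw [ReducesTo, prod_mk_sum]
  exact sum_mem h

lemma prod {ι : Type*} {s : Finset ι} {f : ι → ℚ} {g : ι → ZMod p}
    (h : ∀ i ∈ s, ReducesTo (f i) (g i)) : ReducesTo (∏ i ∈ s, f i) (∏ i ∈ s, g i) := by
  rw [ReducesTo, prod_mk_prod]
  exact prod_mem h

lemma ne_zero (hx : ReducesTo x a) (ha : a ≠ 0) : x ≠ 0 := by
  rintro rfl
  exact ha (hx.unique zero)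

lemma inv (hx : ReducesTo x a) (ha : a ≠ 0) : ReducesTo x⁻¹ a⁻¹ := by
  obtain ⟨-, rfl : (x : ZMod p) = a⟩ := hx
  have hnum : (x.num : ZMod p) ≠ 0 := fun h => ha (by rw [Rat.cast_def, h, zero_div])
  have hnum' : x.num ≠ 0 := fun h => hnum (by simp [h])
  refine ⟨fun h => hnum ?_, Rat.cast_inv_of_ne_zero hnum⟩
  rw [Rat.den_inv, if_neg hnum', ZMod.natCast_eq_zero_iff] at h
  rw [ZMod.intCast_zmod_eq_zero_iff_dvd]
  exact Int.natCast_dvd.mpr h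

lemma div (hx : ReducesTo x a) (hy : ReducesTo y b) (hb : b ≠ 0) :
    ReducesTo (x / y) (a / b) := by
  rw [div_eq_mul_inv, div_eq_mul_inv]
  exact hx.mul (hy.inv hb)

lemma prime_mul_of_mem (hx : x ∈ integersAt p) : ReducesTo (p * x) (0 : ZMod p) := by
  obtain ⟨a, ha⟩ := _root_.mem_integersAt.mp hx
  simpa using self.mul ha

lemma exists_eq_prime_mul (hx : ReducesTo x (0 : ZMod p)) : ∃ c ∈ integersAt p, x = p * c := by
  obtain ⟨hden, hcast : (x : ZMod p) = 0⟩ := hx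
  rw [Rat.cast_def, div_eq_zero_iff, or_iff_left hden,
    ZMod.intCast_zmod_eq_zero_iff_dvd] at hcast
  obtain ⟨z, hz⟩ := hcast
  refine ⟨z / x.den, ((intCast z).div (natCast _) hden).mem_integersAt, ?_⟩
  rw [← mul_div_assoc]
  conv_lhs => rw [← Rat.num_div_den x, hz]
  push_cast
  rfl

end ReducesTo

lemma natCast_zmod_ne_zero_of_lt {k : ℕ} (hk : 0 < k) (hkp : k < p) : (k : ZMod p) ≠ 0 := by
  rw [Ne, ZMod.natCast_eq_zero_iff]
  exact Nat.not_dvd_of_pos_of_lt hk hkp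

lemma ReducesTo.natCast_inv {k : ℕ} (hk : 0 < k) (hkp : k < p) :
    ReducesTo (k : ℚ)⁻¹ (k : ZMod p)⁻¹ :=
  (natCast k).inv (natCast_zmod_ne_zero_of_lt hk hkp)

end Reduction

section BernoulliNumbers

variable {p : ℕ} [Fact p.Prime]

lemma bernoulli_mem_integersAt {n : ℕ} (hn : n + 1 < p) : bernoulli n ∈ integersAt p := by
  have h : bernoulli' n ∈ integersAt p := by
    induction n using Nat.strong_induction_on with
    | _ n ih =>
      rw [bernoulli'_def]
      refine sub_mem (one_mem _) (sum_mem fun k hk => ?_)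
      rw [mem_range] at hk
      rw [show (n - k + 1 : ℚ) = ((n - k + 1 : ℕ) : ℚ) by push_cast [hk.le]; ring,
        div_mul_eq_mul_div, div_eq_mul_inv]
      exact mul_mem (mul_mem (natCast_mem _ _) (ih k hk (by omega)))
        (ReducesTo.natCast_inv (by omega) (by omega)).mem_integersAt
  rw [bernoulli]
  exact mul_mem (pow_mem (neg_mem (one_mem _)) n) h

lemma ReducesTo.bernoulli {n : ℕ} (hn : n + 1 < p) :
    ReducesTo (bernoulli n) (bernoulli n : ZMod p) := by
  obtain ⟨a, ha⟩ := _root_.mem_integersAt.mp (bernoulli_mem_integersAt hn)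
  exact ⟨ha.1, rfl⟩

/-- Faulhaber's polynomial for `0 ^ k + 1 ^ k + ⋯ + (x - 1) ^ k`, over a field in which its
coefficients make sense; the casts of Bernoulli numbers are meaningful as long as `k + 1` is less
than the characteristic. -/
def faulhaber {K : Type*} [Field K] (k : ℕ) (x : K) : K :=
  ∑ i ∈ range (k + 1), (bernoulli i : K) * (k + 1).choose i * x ^ (k + 1 - i) / (k + 1)

lemma faulhaber_natCast (k n : ℕ) : faulhaber k (n : ℚ) = ∑ j ∈ range n, (j : ℚ) ^ k := by
  simp only [faulhaber, Rat.cast_id, sum_range_pow]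

lemma faulhaber_zero {K : Type*} [Field K] (k : ℕ) : faulhaber k (0 : K) = 0 :=
  sum_eq_zero fun i hi => by
    rw [mem_range] at hi
    rw [zero_pow (by omega), mul_zero, zero_div]

lemma ReducesTo.faulhaber {k : ℕ} (hk : k + 1 < p) {x : ℚ} {a : ZMod p} (hx : ReducesTo x a) :
    ReducesTo (faulhaber k x) (faulhaber k a) := by
  have hk₀ := natCast_zmod_ne_zero_of_lt k.succ_pos hk
  rw [Nat.cast_succ] at hk₀
  refine sum fun i hi => ?_
  rw [mem_range] at hi
  simp only [Rat.cast_id]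
  exact (((bernoulli (by omega)).mul (natCast _)).mul (hx.pow _)).div ((natCast k).add one) hk₀

lemma faulhaber_natCast_zmod {k : ℕ} (hk : k + 1 < p) (n : ℕ) :
    faulhaber k (n : ZMod p) = ∑ j ∈ range n, (j : ZMod p) ^ k := by
  refine ((ReducesTo.natCast n).faulhaber hk).unique ?_
  rw [faulhaber_natCast]
  exact .sum fun j _ => (ReducesTo.natCast j).pow k

lemma faulhaber_add_one {k : ℕ} (hk : k + 1 < p) (x : ZMod p) :
    faulhaber k (x + 1) = faulhaber k x + x ^ k := by
  obtain ⟨n, rfl⟩ := ZMod.natCast_zmod_surjective x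
  rw [← Nat.cast_succ, faulhaber_natCast_zmod hk, faulhaber_natCast_zmod hk, sum_range_succ]

lemma faulhaber_rat_eq_bernoulli_sub (k : ℕ) (x : ℚ) :
    faulhaber k x =
      ((Polynomial.bernoulli (k + 1)).eval x - _root_.bernoulli (k + 1)) / (k + 1) := by
  have h : (Polynomial.bernoulli (k + 1)).eval x =
      ∑ i ∈ range (k + 1), _root_.bernoulli i * (k + 1).choose i * x ^ (k + 1 - i) +
        _root_.bernoulli (k + 1) := by
    rw [Polynomial.bernoulli, sum_range_succ, Polynomial.eval_add, Polynomial.eval_finsetSum]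
    simp [Polynomial.eval_monomial]
  rw [h, add_sub_cancel_right, sum_div, faulhaber]
  simp only [Rat.cast_id]

lemma bernoulli_eval_one_half (n : ℕ) :
    (Polynomial.bernoulli n).eval (1 / 2) = (2 / 2 ^ n - 1) * _root_.bernoulli n := by
  have h := bernoulliFun_eval_half n
  rw [bernoulliFun, show (2⁻¹ : ℝ) = algebraMap ℚ ℝ (1 / 2) by simp, Polynomial.eval_map_algebraMap,
    Polynomial.aeval_algebraMap_apply, Polynomial.coe_aeval_eq_eval, eq_ratCast] at h
  refine Rat.cast_injective (α := ℝ) ?_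
  push_cast
  exact h

lemma faulhaber_one_half (k : ℕ) :
    faulhaber k (1 / 2 : ℚ) = (2 / 2 ^ (k + 1) - 2) * bernoulli (k + 1) / (k + 1) := by
  rw [faulhaber_rat_eq_bernoulli_sub, bernoulli_eval_one_half]
  ring

end BernoulliNumbers

section RangeSums

lemma sum_range_two_mul_parity {M : Type*} [AddCommMonoid M] (f : ℕ → M) (n : ℕ) :
    ∑ j ∈ range (2 * n), f (j + 1) = ∑ i ∈ range n, (f (2 * i + 1) + f (2 * i + 2)) := by
  induction n with
  | zero => simp
  | succ n ih =>
    rw [sum_range_succ, ← ih, show 2 * (n + 1) = 2 * n + 1 + 1 by ring, sum_range_succ,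
      sum_range_succ, add_assoc]

lemma sum_range_two_mul_reflect {M : Type*} [AddCommMonoid M] (f : ℕ → M) (n : ℕ) :
    ∑ j ∈ range (2 * n), f (j + 1) = ∑ i ∈ range n, (f (i + 1) + f (2 * n + 1 - (i + 1))) := by
  rw [two_mul, sum_range_add, sum_add_distrib, ← sum_range_reflect (fun i => f (n + i + 1))]
  refine congrArg _ (sum_congr rfl fun i hi => congrArg f ?_)
  rw [mem_range] at hi
  omega

lemma sum_range_two_mul_reflect_even {M : Type*} [AddCommMonoid M] (f : ℕ → M) (n : ℕ) :
    ∑ j ∈ range (2 * n), f (j + 1) =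
      ∑ i ∈ range n, (f (2 * (i + 1)) + f (2 * n + 1 - 2 * (i + 1))) := by
  rw [sum_range_two_mul_parity, sum_add_distrib, add_comm, sum_add_distrib,
    ← sum_range_reflect (fun i => f (2 * i + 1))]
  refine congrArg _ (sum_congr rfl fun i hi => congrArg f ?_)
  rw [mem_range] at hi
  omega

end RangeSums

section FiniteFieldSums

lemma sum_pow_eq_ite {K : Type*} [Field K] [Fintype K] {k : ℕ} (hk : k ≠ 0) :
    ∑ x : K, x ^ k = if Fintype.card K - 1 ∣ k then -1 else 0 := by
  classical
  rw [← FiniteField.sum_pow_units, ← add_sum_erase _ _ (mem_univ (0 : K)), zero_pow hk, zero_add,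
    sum_subtype _ (p := (· ≠ 0)) (by simp)]
  exact (Fintype.sum_equiv unitsEquivNeZero _ _ fun _ => rfl).symm

variable {p : ℕ} [Fact p.Prime]

lemma zmod_pow_card_sub_one_sub {k : ℕ} (hk : 0 < k) (hkp : k < p - 1) (x : ZMod p) :
    x ^ (p - 1 - k) = (x ^ k)⁻¹ := by
  rcases eq_or_ne x 0 with rfl | hx
  · rw [zero_pow (by omega), zero_pow hk.ne', inv_zero]
  · rw [pow_sub₀ x hx hkp.le, ZMod.pow_card_sub_one_eq_one hx, one_mul]

lemma sum_range_natCast_zmod {M : Type*} [AddCommMonoid M] (f : ZMod p → M) :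
    ∑ i ∈ range p, f i = ∑ c, f c :=
  sum_nbij' (fun i => (i : ZMod p)) ZMod.val (fun _ _ => mem_univ _)
    (fun c _ => mem_range.mpr c.val_lt) (fun _ hi => ZMod.val_cast_of_lt (mem_range.mp hi))
    (fun c _ => ZMod.natCast_zmod_val c) (fun _ _ => rfl)

variable {n : ℕ} (hn : p = 2 * n + 1)
include hn

lemma two_mul_add_one_zmod_eq_zero : 2 * (n : ZMod p) + 1 = 0 := by
  exact_mod_cast (ZMod.natCast_eq_zero_iff _ _).mpr hn.dvd

lemma two_zmod_ne_zero : (2 : ZMod p) ≠ 0 := fun h => by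
  simpa [h] using two_mul_add_one_zmod_eq_zero hn

lemma four_zmod_ne_zero : (4 : ZMod p) ≠ 0 := by
  rw [show (4 : ZMod p) = 2 * 2 by norm_num]
  exact mul_ne_zero (two_zmod_ne_zero hn) (two_zmod_ne_zero hn)

lemma zmod_odd_ne_zero {m : ℕ} (hm : m < n) : 2 * (m : ZMod p) + 1 ≠ 0 := by
  have h := natCast_zmod_ne_zero_of_lt (p := p) (k := 2 * m + 1) (by omega) (by omega)
  push_cast at h
  exact h

lemma sum_zmod_of_even {g : ZMod p → ZMod p} (h₀ : g 0 = 0) (hg : g.Even) :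
    ∑ c, g c = 2 * ∑ m ∈ range n, g (2 * m + 1) := by
  have h : ∑ i ∈ range p, g i = ∑ j ∈ range (2 * n), g ((j + 1 : ℕ) : ZMod p) := by
    rw [congrArg range hn, sum_range_succ']
    simp [h₀]
  rw [← sum_range_natCast_zmod, h, sum_range_two_mul_parity (fun j => g (j : ZMod p)),
    sum_add_distrib, two_mul, ← sum_range_reflect (fun i => g ((2 * i + 2 : ℕ) : ZMod p))]
  congr 1
  · exact sum_congr rfl fun i _ => by push_cast; rfl
  · refine sum_congr rfl fun i hi => ?_
    rw [mem_range] at hi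
    rw [← hg, show 2 * (n - 1 - i) + 2 = p - (2 * i + 1) by omega, Nat.cast_sub (by omega)]
    push_cast
    rw [ZMod.natCast_self, zero_sub, neg_neg]

end FiniteFieldSums

section InverseSquares

variable {p : ℕ} [Fact p.Prime]

lemma exists_inv_sq_reflect {a : ℕ} (ha : 0 < a) (hap : a < p) :
    ∃ g : ℚ, ReducesTo g (2 * ((a : ZMod p) ^ 3)⁻¹) ∧
      (((p - a : ℕ) : ℚ) ^ 2)⁻¹ = ((a : ℚ) ^ 2)⁻¹ + p * g := by
  have ha₀ := natCast_zmod_ne_zero_of_lt ha hap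
  have ha₁ : (a : ℚ) ≠ 0 := by positivity
  have ha₂ : (p : ℚ) - a ≠ 0 := sub_ne_zero.mpr (by exact_mod_cast hap.ne')
  have haR := ReducesTo.natCast (p := p) a
  have hg : ReducesTo ((2 * a - p) / (a ^ 2 * (p - a) ^ 2) : ℚ)
      ((2 * a - 0) / (a ^ 2 * (0 - a) ^ 2) : ZMod p) :=
    (((ReducesTo.ofNat 2).mul haR).sub .self).div
      ((haR.pow 2).mul ((ReducesTo.self.sub haR).pow 2)) (by simpa using ha₀)
  refine ⟨(2 * a - p) / (a ^ 2 * (p - a) ^ 2), ?_, ?_⟩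
  · convert hg using 1
    field_simp
    ring
  · rw [Nat.cast_sub hap.le]
    field_simp
    ring

variable {n : ℕ} (hn : p = 2 * n + 1) (hp : 3 < p)
include hn hp

/-- Both pairings `i ↔ p - i` and `2i ↔ p - 2i` of the summands express the sum up to `p - 1` by
the sum up to `(p - 1) / 2`, with different coefficients. -/
lemma exists_sum_inv_sq_eq_prime_mul :
    ∃ h : ℚ, ReducesTo h (-(7 / 6) * ∑ i ∈ range n, (((i + 1 : ℕ) : ZMod p) ^ 3)⁻¹) ∧
      ∑ i ∈ range n, (((i + 1 : ℕ) : ℚ) ^ 2)⁻¹ = p * h := by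
  choose! g hg hg' using fun (a : ℕ) (ha : 0 < a) (hap : a < p) => exists_inv_sq_reflect ha hap
  have h2 := two_zmod_ne_zero hn
  have h3 : (3 : ZMod p) ≠ 0 := by exact_mod_cast natCast_zmod_ne_zero_of_lt three_pos hp
  have hreflect : ∑ j ∈ range (2 * n), (((j + 1 : ℕ) : ℚ) ^ 2)⁻¹ =
      2 * ∑ i ∈ range n, (((i + 1 : ℕ) : ℚ) ^ 2)⁻¹ + p * ∑ i ∈ range n, g (i + 1) := by
    rw [sum_range_two_mul_reflect (fun j => ((j : ℚ) ^ 2)⁻¹), mul_sum, mul_sum, ← sum_add_distrib,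
      ← hn]
    refine sum_congr rfl fun i hi => ?_
    rw [mem_range] at hi
    rw [hg' _ (by omega) (by omega)]
    ring
  have hreflect' : ∑ j ∈ range (2 * n), (((j + 1 : ℕ) : ℚ) ^ 2)⁻¹ =
      1 / 2 * ∑ i ∈ range n, (((i + 1 : ℕ) : ℚ) ^ 2)⁻¹ + p * ∑ i ∈ range n, g (2 * (i + 1)) := by
    rw [sum_range_two_mul_reflect_even (fun j => ((j : ℚ) ^ 2)⁻¹), mul_sum, mul_sum,
      ← sum_add_distrib, ← hn]
    refine sum_congr rfl fun i hi => ?_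
    rw [mem_range] at hi
    rw [hg' _ (by omega) (by omega)]
    push_cast
    field_simp
    ring
  refine ⟨2 / 3 * (∑ i ∈ range n, g (2 * (i + 1)) - ∑ i ∈ range n, g (i + 1)), ?_,
    by linear_combination 2 / 3 * (hreflect' - hreflect)⟩
  have hsum := ReducesTo.sum (s := range n) fun i hi => hg (i + 1) i.succ_pos
    (by rw [mem_range] at hi; omega)
  have hsum' := ReducesTo.sum (s := range n) fun i hi => hg (2 * (i + 1)) (by omega)
    (by rw [mem_range] at hi; omega)
  convert ((ReducesTo.ofNat 2).div (.ofNat 3) h3).mul (hsum'.sub hsum) using 1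
  simp only [Nat.cast_mul, mul_pow, mul_inv, ← mul_sum]
  push_cast
  rw [show (6 : ZMod p) = 2 * 3 by norm_num]
  field_simp
  ring

lemma sum_inv_cube_eq_bernoulli :
    ∑ i ∈ range n, (((i + 1 : ℕ) : ZMod p) ^ 3)⁻¹ = -2 * (bernoulli (p - 3) : ZMod p) := by
  have hhalf : ((n + 1 : ℕ) : ZMod p) = 1 / 2 := by
    rw [eq_div_iff (two_zmod_ne_zero hn)]
    push_cast
    linear_combination two_mul_add_one_zmod_eq_zero hn
  have hfaulhaber : ∑ i ∈ range n, (((i + 1 : ℕ) : ZMod p) ^ 3)⁻¹ =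
      faulhaber (p - 4) (1 / 2 : ZMod p) := by
    rw [← hhalf, faulhaber_natCast_zmod (by omega), sum_range_succ', Nat.cast_zero,
      zero_pow (by omega), add_zero]
    refine sum_congr rfl fun i _ => ?_
    rw [← zmod_pow_card_sub_one_sub three_pos (by omega), show p - 1 - 3 = p - 4 by omega]
  have h2 := two_zmod_ne_zero hn
  have h3 : ((p - 4 : ℕ) : ZMod p) + 1 = -3 := by
    rw [Nat.cast_sub (by omega), ZMod.natCast_self]
    norm_num
  have h3' : (3 : ZMod p) ≠ 0 := by exact_mod_cast natCast_zmod_ne_zero_of_lt three_pos hp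
  have hpow : (2 : ZMod p) ^ (p - 4 + 1) = (2 ^ 2)⁻¹ := by
    rw [← zmod_pow_card_sub_one_sub two_pos (by omega), show p - 1 - 2 = p - 4 + 1 by omega]
  have hred : ReducesTo (faulhaber (p - 4) (1 / 2 : ℚ)) ((2 / 2 ^ (p - 4 + 1) - 2) *
      (bernoulli (p - 4 + 1) : ZMod p) / (((p - 4 : ℕ) : ZMod p) + 1)) := by
    rw [faulhaber_one_half]
    exact ((((ReducesTo.ofNat 2).div ((ReducesTo.ofNat 2).pow _) (pow_ne_zero _ h2)).sub
      (.ofNat 2)).mul (.bernoulli (by omega))).div ((ReducesTo.natCast _).add .one)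
      (by rw [h3]; exact neg_ne_zero.mpr h3')
  rw [hfaulhaber, ((ReducesTo.one.div (.ofNat 2) h2).faulhaber (by omega)).unique hred, h3, hpow,
    show p - 4 + 1 = p - 3 by omega]
  field_simp
  ring

end InverseSquares

section ProductExpansion

lemma exists_prod_one_add_mul {R ι : Type*} [CommRing R] (S : Subring R) {t : R} (ht : t ∈ S)
    (s : Finset ι) {f : ι → R} (hf : ∀ i ∈ s, f i ∈ S) :
    ∃ c ∈ S, ∏ i ∈ s, (1 + t * f i) = 1 + t * ∑ i ∈ s, f i + t ^ 2 * c := by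
  classical
  induction s using Finset.induction_on with
  | empty => exact ⟨0, S.zero_mem, by simp⟩
  | insert i s hi ih =>
    obtain ⟨hfi, hfs⟩ := forall_mem_insert .. |>.mp hf
    obtain ⟨c, hc, hprod⟩ := ih hfs
    refine ⟨f i * ∑ j ∈ s, f j + c + t * f i * c, add_mem (add_mem (mul_mem hfi (sum_mem hfs)) hc)
      (mul_mem (mul_mem ht hfi) hc), ?_⟩
    rw [prod_insert hi, sum_insert hi, hprod]
    ring

variable {p : ℕ} [Fact p.Prime] {n : ℕ}

lemma exists_sqDiffProd_four_prime_eq (hn : p = 2 * n + 1) (hp : 3 < p) :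
    ∃ e, ReducesTo e (-(7 / 48) * (bernoulli (p - 3) : ZMod p)) ∧
      sqDiffProd (4 : ℚ) 2 p n = sqDiffProd 4 2 0 n * (1 + p ^ 3 * e) := by
  have h4 := four_zmod_ne_zero hn
  have h3 : (3 : ZMod p) ≠ 0 := by exact_mod_cast natCast_zmod_ne_zero_of_lt three_pos hp
  have h16 : ReducesTo (-(4 ^ 2)⁻¹) (-(4 ^ 2)⁻¹ : ZMod p) :=
    (((ReducesTo.ofNat 4).pow 2).inv (pow_ne_zero 2 h4)).neg
  obtain ⟨h, hh, hsum⟩ := exists_sum_inv_sq_eq_prime_mul hn hp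
  rw [sum_inv_cube_eq_bernoulli hn hp] at hh
  obtain ⟨c, hc, hprod⟩ := exists_prod_one_add_mul (integersAt p) (t := (p : ℚ) ^ 2)
    (pow_mem (natCast_mem _ p) 2) (range n) (f := fun i => -(4 ^ 2)⁻¹ * (((i + 1 : ℕ) : ℚ) ^ 2)⁻¹)
    fun i hi => by
      have hip : i + 1 < p := by rw [mem_range] at hi; omega
      exact (h16.mul (((ReducesTo.natCast _).pow 2).inv
        (pow_ne_zero 2 (natCast_zmod_ne_zero_of_lt i.succ_pos hip)))).mem_integersAt
  refine ⟨-(4 ^ 2)⁻¹ * h + p * c, ?_, ?_⟩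
  · convert (h16.mul hh).add (.prime_mul_of_mem hc) using 1
    rw [show (48 : ZMod p) = 4 ^ 2 * 3 by norm_num, show (6 : ZMod p) = 2 * 3 by norm_num]
    have h2 := two_zmod_ne_zero hn
    field_simp
    ring
  · have hfactor : sqDiffProd (4 : ℚ) 2 p n = sqDiffProd 4 2 0 n *
        ∏ i ∈ range n, (1 + (p : ℚ) ^ 2 * (-(4 ^ 2)⁻¹ * (((i + 1 : ℕ) : ℚ) ^ 2)⁻¹)) := by
      rw [sqDiffProd, sqDiffProd, ← prod_mul_distrib]
      refine prod_congr rfl fun i _ => ?_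
      push_cast
      field_simp
      ring
    rw [hfactor, hprod, ← mul_sum, hsum]
    ring

end ProductExpansion

section LagrangeWeights

open Polynomial

lemma nodal_eq_X_pow_sub_one {K ι : Type*} [Field K] {s : Finset ι} {v : ι → K}
    (hs : s.Nonempty) (hv : Set.InjOn v s) (hpow : ∀ i ∈ s, v i ^ #s = 1) :
    Lagrange.nodal s v = X ^ #s - 1 := by
  have hdeg : (X ^ #s - 1 : K[X]).degree = #s := degree_X_pow_sub_C (card_pos.mpr hs) 1
  refine eq_of_degree_sub_lt_of_eval_index_eq s hv ?_ fun i hi => ?_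
  · refine (degree_sub_lt_left (Lagrange.degree_nodal.trans hdeg.symm) Lagrange.nodal_ne_zero ?_
      ).trans_eq Lagrange.degree_nodal
    rw [Lagrange.nodal_monic.leadingCoeff, leadingCoeff_X_pow_sub_one (card_pos.mpr hs)]
  · rw [Lagrange.eval_nodal_at_node hi, eval_sub, eval_pow, eval_X, eval_one, hpow i hi, sub_self]

/-- Lagrange interpolation at the `#s`-th roots of unity reads the value at `0` off as the
average. -/
lemma eval_zero_basis_of_pow_card_eq_one {K ι : Type*} [Field K] [DecidableEq ι] {s : Finset ι}
    {v : ι → K} (hv : Set.InjOn v s) (hpow : ∀ i ∈ s, v i ^ #s = 1) {m : ι} (hm : m ∈ s) :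
    (Lagrange.basis s v m).eval 0 = (#s : K)⁻¹ := by
  have hs : #s ≠ 0 := card_ne_zero_of_mem hm
  have hvm : v m ≠ 0 := fun h => by simpa [h, hs] using hpow m hm
  rw [Lagrange.eval_basis_not_at_node hm hvm.symm, Lagrange.nodalWeight_eq_eval_derivative_nodal hm,
    nodal_eq_X_pow_sub_one ⟨m, hm⟩ hv hpow]
  simp only [eval_sub, eval_pow, eval_X, eval_one, zero_pow hs, derivative_sub, derivative_X_pow,
    derivative_one, eval_mul, eval_C, sub_zero, zero_sub]
  rw [mul_inv, eq_inv_of_mul_eq_one_left ((pow_sub_one_mul hs _).trans (hpow m hm)), inv_inv,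
    inv_neg, mul_neg, neg_mul, one_mul, mul_assoc, mul_inv_cancel₀ hvm, mul_one, neg_neg]

lemma basis_insert_of_mem {K ι : Type*} [Field K] [DecidableEq ι] {s : Finset ι} {a m : ι}
    (ha : a ∉ s) (hm : m ∈ s) (v : ι → K) :
    Lagrange.basis (insert a s) v m =
      Lagrange.basisDivisor (v m) (v a) * Lagrange.basis s v m := by
  rw [Lagrange.basis, Lagrange.basis, erase_insert_of_ne (ne_of_mem_of_not_mem hm ha).symm,
    prod_insert fun h => ha (mem_of_mem_erase h)]

variable {p : ℕ} [Fact p.Prime]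

lemma ReducesTo.eval_basis {ι : Type*} [DecidableEq ι] {s : Finset ι} {v : ι → ℚ} {w : ι → ZMod p}
    (hvw : ∀ i ∈ s, ReducesTo (v i) (w i)) (hw : Set.InjOn w s) {m : ι} (hm : m ∈ s)
    {x : ℚ} {a : ZMod p} (hx : ReducesTo x a) :
    ReducesTo ((Lagrange.basis s v m).eval x) ((Lagrange.basis s w m).eval a) := by
  rw [Lagrange.basis, Lagrange.basis, eval_prod, eval_prod]
  refine .prod fun j hj => ?_
  obtain ⟨hjm, hj⟩ := mem_erase.mp hj
  simp only [Lagrange.basisDivisor, eval_mul, eval_C, eval_sub, eval_X]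
  exact (((hvw m hm).sub (hvw j hj)).inv (sub_ne_zero.mpr fun h => hjm (hw hj hm h.symm))).mul
    (hx.sub (hvw j hj))

variable {n : ℕ} (hn : p = 2 * n + 1)
include hn

lemma injOn_zmod_odd_sq : Set.InjOn (fun j : ℕ => (2 * (j : ZMod p) + 1) ^ 2) (range n) := by
  intro i hi j hj hij
  rw [mem_coe, mem_range] at hi hj
  have hsum : ((i + j + 1 : ℕ) : ZMod p) ≠ 0 :=
    natCast_zmod_ne_zero_of_lt (i + j).succ_pos (by omega)
  push_cast at hsum
  have hmul : (4 * (i + j + 1) : ZMod p) * (i - j) = 0 := by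
    simp only at hij
    linear_combination hij
  have hcast := (mul_eq_zero.mp hmul).resolve_left (mul_ne_zero (four_zmod_ne_zero hn) hsum)
  rw [sub_eq_zero, ZMod.natCast_eq_natCast_iff', Nat.mod_eq_of_lt (by omega),
    Nat.mod_eq_of_lt (by omega)] at hcast
  exact hcast

lemma eval_zero_basis_zmod_odd_sq {m : ℕ} (hm : m < n) :
    (Lagrange.basis (range n) (fun j : ℕ => (2 * (j : ZMod p) + 1) ^ 2) m).eval 0 = -2 := by
  rw [eval_zero_basis_of_pow_card_eq_one (injOn_zmod_odd_sq hn) (fun i hi => ?_)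
    (mem_range.mpr hm), card_range]
  · refine inv_eq_of_mul_eq_one_right ?_
    linear_combination -two_mul_add_one_zmod_eq_zero hn
  · rw [card_range, ← pow_mul, show 2 * n = p - 1 by omega,
      ZMod.pow_card_sub_one_eq_one (zmod_odd_ne_zero hn (mem_range.mp hi))]

lemma exists_lagrangeWeight_eq_prime_sq_mul {m : ℕ} (hm : m < n) :
    ∃ b, ReducesTo b (2 * ((2 * (m : ZMod p) + 1) ^ 2)⁻¹) ∧ lagrangeWeight n m = p ^ 2 * b := by
  have hodd (j : ℕ) : ReducesTo (2 * (j : ℚ) + 1) (2 * (j : ZMod p) + 1) :=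
    ((ReducesTo.ofNat 2).mul (.natCast j)).add .one
  have hbasis := ReducesTo.eval_basis (fun j _ => (hodd j).pow 2) (injOn_zmod_odd_sq hn)
    (mem_range.mpr hm) .zero
  rw [eval_zero_basis_zmod_odd_sq hn hm] at hbasis
  have hden : ReducesTo ((2 * (m : ℚ) + 1) ^ 2 - p ^ 2) ((2 * (m : ZMod p) + 1) ^ 2) := by
    simpa using ((hodd m).pow 2).sub (ReducesTo.self.pow 2)
  have hb := ((hden.inv (pow_ne_zero 2 (zmod_odd_ne_zero hn hm))).mul hbasis).neg
  rw [mul_neg, neg_neg, mul_comm _ (2 : ZMod p)] at hb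
  refine ⟨_, hb, ?_⟩
  rw [lagrangeWeight, range_add_one, basis_insert_of_mem notMem_range_self (mem_range.mpr hm),
    Lagrange.basisDivisor, show (p : ℚ) = 2 * n + 1 by rw [hn]; push_cast; rfl]
  simp only [eval_mul, eval_C, eval_sub, eval_X]
  ring

end LagrangeWeights

section HarmonicFunction

variable {p : ℕ} [Fact p.Prime] {n : ℕ}

lemma faulhaber_add_one_eq_add_inv (hp : 2 < p) (x : ZMod p) :
    faulhaber (p - 2) (x + 1) = faulhaber (p - 2) x + x⁻¹ := by
  rw [faulhaber_add_one (by omega), show p - 2 = p - 1 - 1 by omega,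
    zmod_pow_card_sub_one_sub one_pos (by omega), pow_one]

lemma choose_prime_sub_one_two (hp : 2 < p) : ((p - 1).choose 2 : ZMod p) = 1 := by
  have hpascal := Nat.choose_succ_succ' (p - 1) 1
  rw [Nat.sub_add_cancel (by omega), Nat.choose_one_right] at hpascal
  have hdvd : (p.choose 2 : ZMod p) = 0 :=
    (ZMod.natCast_eq_zero_iff _ _).mpr ((Fact.out : p.Prime).dvd_choose_self two_ne_zero hp)
  rw [hpascal, Nat.cast_add, Nat.cast_sub (by omega), ZMod.natCast_self] at hdvd
  push_cast at hdvd
  linear_combination hdvd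

/-- Only the term of degree `2` of Faulhaber's polynomial pairs with `x ^ (p - 3)` to a power sum
that is nonzero in `ZMod p`. -/
lemma sum_faulhaber_mul_pow (hp : 3 < p) (c : ZMod p) :
    ∑ x, faulhaber (p - 2) (c * x) * x ^ (p - 3) = bernoulli (p - 3) * c ^ 2 := by
  have hterm (i : ℕ) : ∑ x : ZMod p, (bernoulli i : ZMod p) * (p - 2 + 1).choose i *
      (c * x) ^ (p - 2 + 1 - i) / ((p - 2 : ℕ) + 1) * x ^ (p - 3) =
      bernoulli i * (p - 2 + 1).choose i * c ^ (p - 2 + 1 - i) / ((p - 2 : ℕ) + 1) *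
        ∑ x : ZMod p, x ^ (p - 2 + 1 - i + (p - 3)) := by
    rw [mul_sum]
    exact sum_congr rfl fun x _ => by ring
  have hchoose : ((p - 2 + 1).choose (p - 3) : ZMod p) = 1 := by
    rw [← choose_prime_sub_one_two (p := p) (by omega), show p - 2 + 1 = p - 1 by omega,
      Nat.choose_symm_of_eq_add (show p - 1 = p - 3 + 2 by omega)]
  simp only [faulhaber, sum_mul]
  rw [sum_comm, sum_congr rfl fun i _ => hterm i, sum_eq_single_of_mem (p - 3) (by simp; omega)]
  · rw [sum_pow_eq_ite (by omega), ZMod.card, if_pos ⟨1, by omega⟩, hchoose,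
      show p - 2 + 1 - (p - 3) = 2 by omega, Nat.cast_sub (by omega), ZMod.natCast_self]
    norm_num
    rw [div_neg, div_one, neg_neg]
  · intro i hi hip
    rw [mem_range] at hi
    rw [sum_pow_eq_ite (by omega), ZMod.card, if_neg, mul_zero]
    rintro ⟨k, hk⟩
    have hk₁ : k ≠ 0 := by rintro rfl; omega
    have hk₂ : k ≠ 1 := by rintro rfl; omega
    have := Nat.mul_le_mul_left (p - 1) (show 2 ≤ k by omega)
    omega

/-- A function on `ZMod p` with step-four differences `K (x + 4) - K x = (x + 2)⁻¹`, normalised by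
`K 0 = 0`. Inverses are `(p - 2)`-th powers, so that it is available from Faulhaber's formula. -/
def harmonicStepFour (x : ZMod p) : ZMod p :=
  2⁻¹ * faulhaber (p - 2) (2⁻¹ * x) - 4⁻¹ * faulhaber (p - 2) (4⁻¹ * x)

lemma harmonicStepFour_zero : harmonicStepFour (0 : ZMod p) = 0 := by
  simp only [harmonicStepFour, mul_zero, faulhaber_zero, sub_self]

variable (hn : p = 2 * n + 1)
include hn

lemma harmonicStepFour_add_four (x : ZMod p) :
    harmonicStepFour (x + 4) = harmonicStepFour x + (x + 2)⁻¹ := by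
  have hp : 2 < p := by have := (Fact.out : p.Prime).two_le; omega
  have h2 := two_zmod_ne_zero hn
  have h4 := four_zmod_ne_zero hn
  have hhalf : 2⁻¹ * (x + 4) = 2⁻¹ * x + 1 + 1 := by field_simp; ring
  have hquarter : 4⁻¹ * (x + 4) = 4⁻¹ * x + 1 := by field_simp
  have hinv : 2⁻¹ * (2⁻¹ * x + 1)⁻¹ = (x + 2)⁻¹ := by
    rw [← mul_inv]; congr 1; field_simp
  rw [harmonicStepFour, harmonicStepFour, hhalf, hquarter, faulhaber_add_one_eq_add_inv hp,
    faulhaber_add_one_eq_add_inv hp, faulhaber_add_one_eq_add_inv hp]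
  simp only [mul_inv, inv_inv]
  rw [← hinv]
  field_simp
  ring

lemma eq_of_add_four_eq {M : Type*} {g : ZMod p → M} (hg : ∀ x, g (x + 4) = g x) (x : ZMod p) :
    g x = g 0 := by
  obtain ⟨j, hj⟩ := ZMod.natCast_zmod_surjective (4⁻¹ * x)
  have hmul (j : ℕ) : g (4 * j) = g 0 := by
    induction j with
    | zero => simp
    | succ j ih => rw [Nat.cast_succ, mul_add_one, hg, ih]
  rw [← hmul j, hj, mul_inv_cancel_left₀ (four_zmod_ne_zero hn)]

/-- Its differences are symmetric under `x ↦ -x`, so `K (-x) - K x` has period `4`. -/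
lemma harmonicStepFour_even : (harmonicStepFour (p := p)).Even := by
  intro x
  have hperiod (y : ZMod p) : harmonicStepFour (-(y + 4)) - harmonicStepFour (y + 4) =
      harmonicStepFour (-y) - harmonicStepFour y := by
    have h := harmonicStepFour_add_four hn (-(y + 4))
    rw [show -(y + 4) + 4 = -y by ring, show -(y + 4) + 2 = -(y + 2) by ring, inv_neg] at h
    rw [h, harmonicStepFour_add_four hn]
    ring
  have h := eq_of_add_four_eq hn (g := fun y => harmonicStepFour (-y) - harmonicStepFour y)
    hperiod x
  simpa [sub_eq_zero] using h

lemma sum_harmonicStepFour_mul_inv_sq (hp : 3 < p) :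
    ∑ m ∈ range n, harmonicStepFour (2 * (m : ZMod p) + 1) * ((2 * (m : ZMod p) + 1) ^ 2)⁻¹ =
      7 / 128 * (bernoulli (p - 3) : ZMod p) := by
  have h2 := two_zmod_ne_zero hn
  have hpow (x : ZMod p) : x ^ (p - 3) = (x ^ 2)⁻¹ := by
    rw [← zmod_pow_card_sub_one_sub two_pos (by omega), show p - 1 - 2 = p - 3 by omega]
  have hsum : ∑ x : ZMod p, harmonicStepFour x * x ^ (p - 3) =
      7 / 64 * (bernoulli (p - 3) : ZMod p) := by
    simp only [harmonicStepFour, sub_mul, sum_sub_distrib, mul_assoc, ← mul_sum]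
    rw [sum_faulhaber_mul_pow hp, sum_faulhaber_mul_pow hp, show (4 : ZMod p) = 2 ^ 2 by norm_num,
      show (64 : ZMod p) = 2 ^ 6 by norm_num]
    field_simp
    ring
  have heven : (fun x : ZMod p => harmonicStepFour x * (x ^ 2)⁻¹).Even := fun x => by
    simp only [harmonicStepFour_even hn x, neg_sq]
  simp only [hpow] at hsum
  rw [sum_zmod_of_even hn (by simp) heven] at hsum
  refine mul_left_cancel₀ h2 (hsum.trans ?_)
  rw [show (64 : ZMod p) = 2 ^ 6 by norm_num, show (128 : ZMod p) = 2 ^ 7 by norm_num]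
  field_simp

end HarmonicFunction

section Assembly

variable {p : ℕ} [Fact p.Prime]

/-- The ratio `x / y` is `1 + a * p` modulo `p ^ 2`; stated without division, so that no
integrality of `x` and `y` is needed. -/
def RatioReducesTo (x y : ℚ) (a : ZMod p) : Prop := ∃ c : ℚ, ReducesTo c a ∧ x = y * (1 + p * c)

namespace RatioReducesTo

variable {x y z : ℚ} {a b : ZMod p}

lemma refl (x : ℚ) : RatioReducesTo x x (0 : ZMod p) := ⟨0, .zero, by ring⟩

lemma trans (hxy : RatioReducesTo x y a) (hyz : RatioReducesTo y z b) :
    RatioReducesTo x z (a + b) := by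
  obtain ⟨c, hc, rfl⟩ := hxy
  obtain ⟨d, hd, rfl⟩ := hyz
  refine ⟨c + d + p * (c * d), ?_, by ring⟩
  simpa using (hc.add hd).add (.prime_mul_of_mem (hc.mul hd).mem_integersAt)

lemma symm (hxy : RatioReducesTo x y a) : RatioReducesTo y x (-a) := by
  obtain ⟨c, hc, rfl⟩ := hxy
  have hunit : ReducesTo (1 + p * c) (1 : ZMod p) := by
    simpa using ReducesTo.one.add (.prime_mul_of_mem hc.mem_integersAt)
  have hunit₀ := hunit.ne_zero one_ne_zero
  refine ⟨-c / (1 + p * c), by simpa using hc.neg.div hunit one_ne_zero, ?_⟩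
  field_simp
  ring

lemma of_mul_sub_eq_mul_add {d : ℚ} (hd : ReducesTo d a) (ha : a ≠ 0)
    (h : x * (d - 2 * p) = y * (d + 2 * p)) : RatioReducesTo x y (4 / a) := by
  have hden : ReducesTo (d - 2 * p) a := by
    simpa using hd.sub ((ReducesTo.ofNat 2).mul .self)
  have hden₀ := hden.ne_zero ha
  refine ⟨4 / (d - 2 * p), (ReducesTo.ofNat 4).div hden ha, ?_⟩
  rw [eq_div_of_mul_eq hden₀ h]
  field_simp
  ring

end RatioReducesTo

variable {n : ℕ} (hn : p = 2 * n + 1)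
include hn

lemma ratioReducesTo_nodeValue_zero {m : ℕ} (hm : m ≤ n) :
    RatioReducesTo (nodeValue n m) (nodeValue n 0)
      (4 * (harmonicStepFour (2 * (m : ZMod p) + 1) - harmonicStepFour 1)) := by
  have hpn : 2 * (n : ℚ) + 1 = p := by rw [hn]; push_cast; rfl
  induction m using Nat.twoStepInduction with
  | zero => simpa using RatioReducesTo.refl (p := p) (nodeValue n 0)
  | one =>
    have h := nodeValue_one n
    rw [hpn] at h
    have hK := harmonicStepFour_add_four hn (-1)
    rw [harmonicStepFour_even hn, show (-1 + 4 : ZMod p) = 2 * (1 : ℕ) + 1 by norm_num,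
      show (-1 + 2 : ZMod p) = 1 by norm_num] at hK
    convert RatioReducesTo.of_mul_sub_eq_mul_add (p := p) .one one_ne_zero h using 1
    rw [hK]
    ring
  | more m ih _ =>
    have h := nodeValue_add_two n m
    rw [hpn] at h
    have hd : ReducesTo (2 * m + 3 : ℚ) (2 * m + 3 : ZMod p) :=
      ((ReducesTo.ofNat 2).mul (.natCast m)).add (.ofNat 3)
    have hd₀ := zmod_odd_ne_zero hn (show m + 1 < n by omega)
    rw [show 2 * ((m + 1 : ℕ) : ZMod p) + 1 = 2 * m + 3 by push_cast; ring] at hd₀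
    have hK := harmonicStepFour_add_four hn (2 * m + 1)
    rw [show (2 * m + 1 + 4 : ZMod p) = 2 * ((m + 2 : ℕ) : ZMod p) + 1 by push_cast; ring,
      show (2 * m + 1 + 2 : ZMod p) = 2 * m + 3 by ring] at hK
    convert (RatioReducesTo.of_mul_sub_eq_mul_add hd hd₀ h).trans (ih (by omega)) using 1
    rw [hK]
    ring

lemma ratioReducesTo_nodeValue_self {m : ℕ} (hm : m ≤ n) :
    RatioReducesTo (nodeValue n m) (nodeValue n n)
      (4 * harmonicStepFour (2 * (m : ZMod p) + 1)) := by
  convert (ratioReducesTo_nodeValue_zero hn hm).trans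
    (ratioReducesTo_nodeValue_zero hn le_rfl).symm using 1
  rw [two_mul_add_one_zmod_eq_zero hn, harmonicStepFour_zero]
  ring

variable (hp : 3 < p)
include hp

lemma exists_sum_deformedTerm_zero_mul_eq :
    ∃ s, ReducesTo s (7 / 16 * (bernoulli (p - 3) : ZMod p)) ∧
      (∑ k ∈ range (n + 1), deformedTerm 0 k) * sqDiffProd 4 2 0 n =
        nodeValue n n * (1 + p ^ 3 * s) := by
  have h2 := two_zmod_ne_zero hn
  choose! a ha hnode using fun m (hm : m < n) => ratioReducesTo_nodeValue_self hn hm.le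
  choose! b hb hweight using fun m (hm : m < n) => exists_lagrangeWeight_eq_prime_sq_mul hn hm
  refine ⟨∑ m ∈ range n, a m * b m, ?_, ?_⟩
  · have hsum := ReducesTo.sum (s := range n) fun m hm =>
      (ha m (mem_range.mp hm)).mul (hb m (mem_range.mp hm))
    have hterm (m : ℕ) : 4 * harmonicStepFour (2 * (m : ZMod p) + 1) *
        (2 * ((2 * (m : ZMod p) + 1) ^ 2)⁻¹) =
        8 * (harmonicStepFour (2 * (m : ZMod p) + 1) * ((2 * (m : ZMod p) + 1) ^ 2)⁻¹) := by
      ring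
    simp only [hterm, ← mul_sum, sum_harmonicStepFour_mul_inv_sq hn hp] at hsum
    convert hsum using 1
    rw [show (16 : ZMod p) = 2 ^ 4 by norm_num, show (128 : ZMod p) = 2 ^ 7 by norm_num]
    field_simp
    ring
  · have hsum : ∑ m ∈ range n, a m * lagrangeWeight n m = p ^ 2 * ∑ m ∈ range n, a m * b m := by
      rw [mul_sum]
      refine sum_congr rfl fun m hm => ?_
      rw [hweight m (mem_range.mp hm)]
      ring
    rw [sum_deformedTerm_zero_mul_of_nodeValue hnode, hsum]
    ring

lemma exists_sum_deformedTerm_zero_eq :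
    ∃ s, ReducesTo s (7 / 24 * (bernoulli (p - 3) : ZMod p)) ∧
      ∑ k ∈ range (n + 1), deformedTerm 0 k = (-1) ^ n * p * (1 + p ^ 3 * s) := by
  have h2 := two_zmod_ne_zero hn
  have h3 : (3 : ZMod p) ≠ 0 := by exact_mod_cast natCast_zmod_ne_zero_of_lt three_pos hp
  obtain ⟨s, hs, hsum⟩ := exists_sum_deformedTerm_zero_mul_eq hn hp
  obtain ⟨e, he, hprod⟩ := exists_sqDiffProd_four_prime_eq hn hp
  refine ⟨s + e + p * (p ^ 2 * (s * e)), ?_, ?_⟩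
  · convert (hs.add he).add (.prime_mul_of_mem
      (((ReducesTo.self.pow 2).mul (hs.mul he)).mem_integersAt)) using 1
    rw [show (48 : ZMod p) = 2 ^ 4 * 3 by norm_num, show (24 : ZMod p) = 2 ^ 3 * 3 by norm_num,
      show (16 : ZMod p) = 2 ^ 4 by norm_num]
    field_simp
    ring
  · refine mul_right_cancel₀ (sqDiffProd_four_zero_ne_zero n) ?_
    rw [hsum, nodeValue, show 2 * (n : ℚ) + 1 = p by rw [hn]; push_cast; rfl, hprod]
    ring

lemma exists_sum_deformedTerm_zero_sub_eq :
    ∃ c ∈ integersAt p, ∑ k ∈ range (n + 1), deformedTerm 0 k -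
      ((-1) ^ n * p + (-1) ^ n * (7 / 24) * (p : ℚ) ^ 4 * bernoulli (p - 3)) = c * (p : ℚ) ^ 5 := by
  have h24 : (24 : ZMod p) ≠ 0 := by
    rw [show (24 : ZMod p) = 2 * 4 * 3 by norm_num]
    refine mul_ne_zero (mul_ne_zero (two_zmod_ne_zero hn) (four_zmod_ne_zero hn)) ?_
    exact_mod_cast natCast_zmod_ne_zero_of_lt three_pos hp
  obtain ⟨s, hs, hsum⟩ := exists_sum_deformedTerm_zero_eq hn hp
  have hs₀ := hs.sub (((ReducesTo.ofNat 7).div (.ofNat 24) h24).mul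
    (.bernoulli (show p - 3 + 1 < p by omega)))
  rw [sub_self] at hs₀
  obtain ⟨c, hc, hsc⟩ := hs₀.exists_eq_prime_mul
  refine ⟨(-1) ^ n * c, mul_mem (pow_mem (neg_mem (one_mem _)) n) hc, ?_⟩
  rw [hsum]
  linear_combination (-1) ^ n * (p : ℚ) ^ 4 * hsc

end Assembly

theorem sun_supercongruence_p5 (p : ℕ) (hp : p.Prime) (hp3 : 3 < p) :
    ratCongr p 5
      (∑ n ∈ Finset.range ((p - 1) / 2 + 1),
        (6 * (n : ℚ) + 1) / 256 ^ n * ((2 * n).choose n : ℚ) ^ 3)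
      ((-1 : ℚ) ^ ((p - 1) / 2) * p +
        (-1 : ℚ) ^ ((p - 1) / 2) * (7 / 24) * (p : ℚ) ^ 4 * bernoulli (p - 3)) := by
  have := Fact.mk hp
  have hn : p = 2 * ((p - 1) / 2) + 1 := by
    obtain ⟨k, hk⟩ := hp.odd_of_ne_two (by omega)
    omega
  obtain ⟨c, hc, hsum⟩ := exists_sum_deformedTerm_zero_sub_eq hn hp3
  rw [sum_congr rfl fun k _ => deformedTerm_zero k] at hsum
  exact ⟨c, hsum, not_dvd_den_of_mem_integersAt hc⟩
end

section
/- Let p > 3 be a prime, and define F(n,k) = (6n-2k+1)/2^{8n-2k} · C(2n,n)·C(2n+2k,n+k)·C(2n-2k,n-k)·C(n+k,n) / C(2k,k) for integers n ≥ k ≥ 0. Then F((p-1)/2, (p-1)/2) ≡ (-1)^{(p-1)/2} · p · (1 - p·q_p(2) + p^2·q_p(2)^2 - p^3·q_p(2)^3 - (7/12)·p^3·B_{p-3}) modulo p^5 (as rational numbers). -/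
/-- The WZ-pair function `F(n,k)`; it vanishes for `n < k`. -/
def F (n k : ℕ) : ℚ :=
  if k ≤ n then
    (6 * (n : ℚ) - 2 * k + 1) / 2 ^ (8 * n - 2 * k) *
      (((2 * n).choose n : ℚ) * ((2 * n + 2 * k).choose (n + k)) *
        ((2 * n - 2 * k).choose (n - k)) * ((n + k).choose n)) /
      ((2 * k).choose k)
  else 0

/-!
Put `p = n = 2m + 1`. Pairing `j` with `n - j` shows that `C(4m + 1, 2m)` and `C(2m, m) / (-16) ^ m`
are the products over `1 ≤ j ≤ m` of `1 + n² x / (j (n - j))` for `x = 2` and `x = -1/4`. Modulo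
`p ^ 4` such a product is `1 + p² x S`, where `S = ∑ 1 / (j (p - j))`, and modulo `p ^ 2` the sum
`-2 S` is that of the inverse squares of `1, …, p - 1`. By Euler's theorem these may be replaced by
the powers `j ^ (φ(p ^ 2) - 2)`, Kummer's congruence lowers the exponent to `p - 3`, and Faulhaber's
formula gives `S ≡ -p B_{p-3} / 3`. The remaining factor `4⁻ᵐ` is the inverse of
`2 ^ (p - 1) = 1 + p q_p(2)`, a geometric series modulo `p ^ 4`.
-/

open Finset

/-- The ring `ℤ_(p)` of `p`-integral rational numbers. -/
noncomputable abbrev pIntegers (p : ℕ) [Fact p.Prime] : Subring ℚ :=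
  (Rat.padicValuation p).integer

section pIntegers

variable {p : ℕ} [Fact p.Prime]

lemma mem_pIntegers_iff {x : ℚ} : x ∈ pIntegers p ↔ ¬p ∣ x.den :=
  Rat.padicValuation_le_one_iff

lemma inv_natCast_mem_pIntegers {n : ℕ} (hn : ¬p ∣ n) : (n : ℚ)⁻¹ ∈ pIntegers p := by
  have hn0 : n ≠ 0 := fun h => hn (h ▸ dvd_zero p)
  rwa [mem_pIntegers_iff, Rat.inv_natCast_den, if_neg hn0]

lemma inv_natCast_mem_pIntegers_of_lt {n : ℕ} (hn0 : 0 < n) (hn : n < p) :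
    (n : ℚ)⁻¹ ∈ pIntegers p :=
  inv_natCast_mem_pIntegers (Nat.not_dvd_of_pos_of_lt hn0 hn)

lemma inv_two_mem_pIntegers (hp2 : p ≠ 2) : (2 : ℚ)⁻¹ ∈ pIntegers p := by
  exact_mod_cast inv_natCast_mem_pIntegers_of_lt two_pos
    (lt_of_le_of_ne (Fact.out : p.Prime).two_le hp2.symm)

lemma inv_mul_sub_mem_pIntegers {n : ℕ} (hn0 : 0 < n) (hn : n < p) :
    ((n : ℚ) * (p - n))⁻¹ ∈ pIntegers p := by
  rw [mul_inv, ← Nat.cast_sub hn.le]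
  exact mul_mem (inv_natCast_mem_pIntegers_of_lt hn0 hn)
    (inv_natCast_mem_pIntegers_of_lt (Nat.sub_pos_of_lt hn) (Nat.sub_lt (hn0.trans hn) hn0))

lemma bernoulli_mem_pIntegers {n : ℕ} (hn : n + 1 < p) : bernoulli n ∈ pIntegers p := by
  obtain ⟨k, rfl⟩ | hodd := n.even_or_odd
  · obtain ⟨z, hz⟩ := Bernoulli.vonStaudt_clausen k
    rw [← two_mul, eq_sub_of_add_eq hz.symm]
    refine sub_mem (intCast_mem _ z) (sum_mem fun q hq => ?_)
    obtain ⟨hq_lt, hq_prime, -⟩ := mem_filter.1 hq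
    rw [one_div]
    exact inv_natCast_mem_pIntegers_of_lt hq_prime.pos (by grind)
  · obtain rfl | hn1 := eq_or_ne n 1
    · rw [bernoulli_one, neg_div, one_div]
      exact neg_mem (inv_natCast_mem_pIntegers_of_lt two_pos hn)
    · rw [bernoulli_eq_zero_of_odd hodd (by grind)]
      exact zero_mem _

end pIntegers

namespace ratCongr

variable {p r : ℕ} [Fact p.Prime] {a b c d : ℚ}

lemma iff_exists_mem : ratCongr p r a b ↔ ∃ c ∈ pIntegers p, a - b = c * (p : ℚ) ^ r := by
  simp only [ratCongr, mem_pIntegers_iff, and_comm]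

protected lemma refl (a : ℚ) : ratCongr p r a a :=
  iff_exists_mem.2 ⟨0, zero_mem _, by ring⟩

protected lemma symm (h : ratCongr p r a b) : ratCongr p r b a := by
  obtain ⟨x, hx, h⟩ := iff_exists_mem.1 h
  exact iff_exists_mem.2 ⟨-x, neg_mem hx, by linear_combination -h⟩

protected lemma add (hab : ratCongr p r a b) (hcd : ratCongr p r c d) :
    ratCongr p r (a + c) (b + d) := by
  obtain ⟨x, hx, hab⟩ := iff_exists_mem.1 hab
  obtain ⟨y, hy, hcd⟩ := iff_exists_mem.1 hcd
  exact iff_exists_mem.2 ⟨x + y, add_mem hx hy, by linear_combination hab + hcd⟩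

protected lemma trans (hab : ratCongr p r a b) (hbc : ratCongr p r b c) : ratCongr p r a c := by
  simpa using (hab.add hbc).add (.refl (-b))

protected lemma sum {ι : Type*} {s : Finset ι} {f g : ι → ℚ}
    (h : ∀ i ∈ s, ratCongr p r (f i) (g i)) : ratCongr p r (∑ i ∈ s, f i) (∑ i ∈ s, g i) := by
  simp only [iff_exists_mem] at h ⊢
  choose! x hx hfg using h
  exact ⟨∑ i ∈ s, x i, sum_mem hx, by rw [← sum_sub_distrib, sum_congr rfl hfg, sum_mul]⟩

protected lemma mul (hb : b ∈ pIntegers p) (hd : d ∈ pIntegers p) (hab : ratCongr p r a b)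
    (hcd : ratCongr p r c d) : ratCongr p r (a * c) (b * d) := by
  obtain ⟨x, hx, hab⟩ := iff_exists_mem.1 hab
  obtain ⟨y, hy, hcd⟩ := iff_exists_mem.1 hcd
  refine iff_exists_mem.2 ⟨b * y + x * d + x * y * p ^ r, ?_, ?_⟩
  · exact add_mem (add_mem (mul_mem hb hy) (mul_mem hx hd))
      (mul_mem (mul_mem hx hy) (pow_mem (natCast_mem _ p) r))
  · linear_combination c * hab + (b + x * p ^ r) * hcd

protected lemma mul_left (hc : c ∈ pIntegers p) (h : ratCongr p r a b) :
    ratCongr p r (c * a) (c * b) := by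
  obtain ⟨x, hx, h⟩ := iff_exists_mem.1 h
  exact iff_exists_mem.2 ⟨c * x, mul_mem hc hx, by linear_combination c * h⟩

lemma pow_mul_left (s : ℕ) (h : ratCongr p r a b) :
    ratCongr p (s + r) ((p : ℚ) ^ s * a) ((p : ℚ) ^ s * b) := by
  obtain ⟨x, hx, h⟩ := iff_exists_mem.1 h
  exact iff_exists_mem.2 ⟨x, hx, by rw [pow_add]; linear_combination (p : ℚ) ^ s * h⟩

lemma of_intModEq {a b : ℤ} (h : a ≡ b [ZMOD p ^ r]) : ratCongr p r a b := by
  obtain ⟨z, hz⟩ := h.symm.dvd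
  refine iff_exists_mem.2 ⟨z, intCast_mem _ z, ?_⟩
  rw [← Int.cast_sub, hz]
  push_cast
  ring

lemma prod_one_add {ι : Type*} (s : Finset ι) {f : ι → ℚ} (hf : ∀ i ∈ s, f i ∈ pIntegers p) :
    ratCongr p (2 * r) (∏ i ∈ s, (1 + (p : ℚ) ^ r * f i)) (1 + (p : ℚ) ^ r * ∑ i ∈ s, f i) := by
  classical
  induction s using Finset.induction_on with
  | empty => simpa using ratCongr.refl 1
  | insert i s hi ih =>
    have hfi := hf i (mem_insert_self i s)
    have hfs := fun j hj => hf j (mem_insert_of_mem hj)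
    have hfactor : 1 + (p : ℚ) ^ r * f i ∈ pIntegers p :=
      add_mem (one_mem _) (mul_mem (pow_mem (natCast_mem _ p) r) hfi)
    rw [prod_insert hi, sum_insert hi]
    refine ((ih hfs).mul_left hfactor).trans (iff_exists_mem.2 ⟨_, mul_mem hfi (sum_mem hfs), ?_⟩)
    ring

lemma mul_one_add_pow_mul (ha : ratCongr p 1 a 1) (hb : b ∈ pIntegers p) :
    ratCongr p (r + 1) (a * (1 + (p : ℚ) ^ r * b)) (a + (p : ℚ) ^ r * b) := by
  obtain ⟨x, hx, ha⟩ := iff_exists_mem.1 ha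
  exact iff_exists_mem.2 ⟨x * b, mul_mem hx hb, by linear_combination (p : ℚ) ^ r * b * ha⟩

protected lemma inv_pow {j n : ℕ} (hj : ¬p ∣ j) (hn : n ≤ (p ^ r).totient) :
    ratCongr p r ((j : ℚ) ^ n)⁻¹ ((j : ℚ) ^ ((p ^ r).totient - n)) := by
  have hcop : j.Coprime (p ^ r) := ((Fact.out : p.Prime).coprime_iff_not_dvd.2 hj).symm.pow_right r
  have euler : ratCongr p r ((j : ℚ) ^ (p ^ r).totient) 1 := by
    have h := Int.natCast_modEq_iff.2 (Nat.ModEq.pow_totient hcop)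
    rw [Nat.cast_pow p] at h
    exact_mod_cast of_intModEq h
  have hinv : ((j : ℚ) ^ n)⁻¹ ∈ pIntegers p := by
    simpa using pow_mem (inv_natCast_mem_pIntegers hj) n
  have hj0 : (j : ℚ) ≠ 0 := Nat.cast_ne_zero.2 fun h => hj (h ▸ dvd_zero p)
  have h := (euler.mul_left hinv).symm
  rwa [mul_one, ← pow_sub_mul_pow (j : ℚ) hn, mul_comm,
    mul_inv_cancel_right₀ (pow_ne_zero n hj0)] at h

end ratCongr

section Rearrangement

@[to_additive sum_Ico_one_two_mul_add_one]
lemma prod_Ico_one_two_mul_add_one {M : Type*} [CommMonoid M] (m : ℕ) (f : ℕ → M) :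
    ∏ j ∈ Ico 1 (2 * m + 1), f j = ∏ j ∈ Ico 1 (m + 1), (f j * f (2 * m + 1 - j)) := by
  rw [prod_mul_distrib, ← prod_Ico_consecutive f (by omega : 1 ≤ m + 1) (by omega)]
  congr 1
  exact prod_nbij' (2 * m + 1 - ·) (2 * m + 1 - ·) (by grind) (by grind) (by grind) (by grind)
    (by grind)

lemma sum_range_two_mul_eq_even_add_odd {A : Type*} [AddCommMonoid A] (m : ℕ) (f : ℕ → A) :
    ∑ j ∈ range (2 * m), f j = ∑ i ∈ range m, f (2 * i) + ∑ i ∈ range m, f (2 * i + 1) := by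
  induction m with
  | zero => simp
  | succ m ih =>
    rw [mul_add_one, sum_range_succ, sum_range_succ, ih, sum_range_succ _ m,
      sum_range_succ _ m, add_assoc, add_add_add_comm]

-- Doubling maps `{0, …, 2m}` onto the even residues below `n = 2m + 1` and `n` plus the odd ones.
lemma sum_range_comp_two_mul {A : Type*} [AddCommGroup A] (m : ℕ) (f : ℕ → A) :
    ∑ j ∈ range (2 * m + 1), f (2 * j) - ∑ j ∈ range (2 * m + 1), f j =
      ∑ i ∈ range m, (f (2 * m + 1 + (2 * i + 1)) - f (2 * i + 1)) := by
  have hdouble : ∑ j ∈ range (2 * m + 1), f (2 * j) =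
      ∑ j ∈ range (m + 1), f (2 * j) + ∑ i ∈ range m, f (2 * m + 1 + (2 * i + 1)) := by
    rw [show 2 * m + 1 = m + 1 + m by omega, sum_range_add]
    exact congrArg _ (sum_congr rfl fun i _ => by ring_nf)
  rw [hdouble, sum_range_succ, sum_range_succ f, sum_range_two_mul_eq_even_add_odd, sum_sub_distrib]
  abel

end Rearrangement

section PowerSums

lemma add_pow_modEq_sq (n x : ℤ) (k : ℕ) :
    (n + x) ^ k ≡ x ^ k + n * k * x ^ (k - 1) [ZMOD n ^ 2] := by
  obtain ⟨z, hz⟩ := Polynomial.powAddExpansion x n k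
  rw [add_comm n, hz]
  exact Int.modEq_iff_dvd.2 ⟨-z, by ring⟩

lemma two_pow_sub_one_mul_sum_pow_modEq (m k : ℕ) :
    (2 ^ k - 1) * ∑ j ∈ range (2 * m + 1), (j : ℤ) ^ k ≡
      (2 * m + 1) * k * ∑ i ∈ range m, (2 * i + 1 : ℤ) ^ (k - 1) [ZMOD (2 * m + 1) ^ 2] := by
  have hdouble := sum_range_comp_two_mul m fun j => (j : ℤ) ^ k
  push_cast at hdouble
  simp only [mul_pow, ← mul_sum] at hdouble
  rw [sub_one_mul, hdouble, mul_sum]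
  refine Int.ModEq.sum fun i _ => ?_
  simpa using (add_pow_modEq_sq (2 * m + 1) (2 * i + 1) k).sub_right ((2 * i + 1 : ℤ) ^ k)

variable {p : ℕ} [hp : Fact p.Prime]

lemma two_pow_prime_sub_one_modEq_one (hp2 : p ≠ 2) : 2 ^ (p - 1) ≡ 1 [ZMOD p] :=
  Int.ModEq.pow_card_sub_one_eq_one hp.out <| by
    exact_mod_cast Nat.isCoprime_iff_coprime.2 (Nat.coprime_two_left.2 (hp.out.odd_of_ne_two hp2))

lemma dvd_sum_range_pow (hp2 : p ≠ 2) {k : ℕ} (hk : ¬(p : ℤ) ∣ 2 ^ k - 1) :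
    (p : ℤ) ∣ ∑ j ∈ range p, (j : ℤ) ^ k := by
  obtain ⟨m, rfl⟩ := hp.out.odd_of_ne_two hp2
  have h := (two_pow_sub_one_mul_sum_pow_modEq m k).of_dvd (dvd_pow_self _ two_ne_zero)
  rw [mul_assoc] at h
  have hdvd := h.dvd_iff.2 (dvd_mul_right _ _)
  exact ((Nat.prime_iff_prime_int.1 hp.out).dvd_or_dvd (by exact_mod_cast hdvd)).resolve_left hk

/- This is Kummer's congruence `B_k / k ≡ B_l / l` for the power sums, which are `p B_k` and `p B_l`
modulo `p ^ 2`. -/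
lemma mul_sum_range_pow_modEq (hp2 : p ≠ 2) {k l : ℕ} (hl : 1 < l) (hlk : l ≤ k)
    (hdvd : p - 1 ∣ k - l) (h2 : ¬(p : ℤ) ∣ 2 ^ l - 1) :
    l * ∑ j ∈ range p, (j : ℤ) ^ k ≡ k * ∑ j ∈ range p, (j : ℤ) ^ l [ZMOD p ^ 2] := by
  have hpow (x : ℤ) {a b : ℕ} (hab : a - b = k - l) (hba : b ≤ a) (hb : 0 < b) :
      x ^ a ≡ x ^ b [ZMOD p] :=
    Int.ModEq.pow_eq_pow hp.out (hab ▸ hdvd) hba hb x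
  have hunit : (2 ^ k - 1 : ℤ) ≡ 2 ^ l - 1 [ZMOD p] := (hpow 2 rfl hlk (by omega)).sub_right 1
  obtain ⟨t, ht⟩ := dvd_sum_range_pow hp2 (k := k) fun h => h2 (hunit.dvd_iff.1 h)
  have hcop : IsCoprime ((p : ℤ) ^ 2) (2 ^ l - 1) :=
    ((Nat.prime_iff_prime_int.1 hp.out).coprime_iff_not_dvd.2 h2).pow_left
  refine Int.modEq_iff_dvd.2 (hcop.dvd_of_dvd_mul_left ?_)
  rw [mul_sub]
  refine Int.ModEq.dvd ?_
  have hleft : (2 ^ l - 1) * ∑ j ∈ range p, (j : ℤ) ^ k ≡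
      (2 ^ k - 1) * ∑ j ∈ range p, (j : ℤ) ^ k [ZMOD p ^ 2] := by
    rw [ht, mul_left_comm, mul_left_comm (2 ^ k - 1 : ℤ), sq]
    exact Int.ModEq.mul_left' (hunit.symm.mul_right t)
  obtain ⟨m, rfl⟩ := hp.out.odd_of_ne_two hp2
  push_cast at hleft ⊢
  have hodd : (2 * m + 1 : ℤ) * ∑ i ∈ range m, (2 * i + 1 : ℤ) ^ (k - 1) ≡
      (2 * m + 1) * ∑ i ∈ range m, (2 * i + 1 : ℤ) ^ (l - 1) [ZMOD (2 * m + 1) ^ 2] := by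
    rw [sq]
    refine Int.ModEq.mul_left' (Int.ModEq.sum fun i _ => ?_)
    exact_mod_cast hpow (2 * i + 1) (by omega) (by omega) (by omega)
  have hk := two_pow_sub_one_mul_sum_pow_modEq m k
  have hl := two_pow_sub_one_mul_sum_pow_modEq m l
  rw [mul_right_comm] at hk hl
  calc (2 ^ l - 1) * (l * ∑ j ∈ range (2 * m + 1), (j : ℤ) ^ k)
      = l * ((2 ^ l - 1) * ∑ j ∈ range (2 * m + 1), (j : ℤ) ^ k) := mul_left_comm _ _ _
    _ ≡ l * ((2 * m + 1) * (∑ i ∈ range m, (2 * i + 1 : ℤ) ^ (l - 1)) * k)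
        [ZMOD (2 * m + 1) ^ 2] := ((hleft.trans hk).trans (hodd.mul_right _)).mul_left _
    _ = k * ((2 * m + 1) * (∑ i ∈ range m, (2 * i + 1 : ℤ) ^ (l - 1)) * l) := by ring
    _ ≡ k * ((2 ^ l - 1) * ∑ j ∈ range (2 * m + 1), (j : ℤ) ^ l)
        [ZMOD (2 * m + 1) ^ 2] := hl.symm.mul_left _
    _ = (2 ^ l - 1) * (k * ∑ j ∈ range (2 * m + 1), (j : ℤ) ^ l) := mul_left_comm _ _ _

lemma not_dvd_two_pow_sub_one (hp3 : 3 < p) {k : ℕ} (hk : p - 1 ∣ k + 2) :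
    ¬(p : ℤ) ∣ 2 ^ k - 1 := fun h => by
  obtain ⟨c, hc⟩ := hk
  have hfermat : (2 : ℤ) ^ (k + 2) ≡ 1 [ZMOD p] := by
    rw [hc, pow_mul, ← one_pow (M := ℤ) c]
    exact (two_pow_prime_sub_one_modEq_one (p := p) (by omega)).pow c
  have hthree : (p : ℤ) ∣ 3 := by
    rw [show (3 : ℤ) = 2 ^ (k + 2) - 1 - 4 * (2 ^ k - 1) by ring]
    exact dvd_sub hfermat.symm.dvd (h.mul_left 4)
  exact absurd (Int.le_of_dvd three_pos hthree) (by omega)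

-- `φ(p ^ 2) - 2 ≡ p - 3` modulo `p - 1`, and the two exponents are `-2` and `-3` modulo `p`.
lemma three_mul_sum_range_pow_modEq (hp3 : 3 < p) :
    3 * ∑ j ∈ range p, (j : ℤ) ^ ((p ^ 2).totient - 2) ≡
      2 * ∑ j ∈ range p, (j : ℤ) ^ (p - 3) [ZMOD p ^ 2] := by
  have hp2 : p ≠ 2 := by omega
  have htot : (p ^ 2).totient - 2 = p - 3 + (p - 1) * (p - 1) := by
    rw [Nat.totient_prime_pow_succ hp.out, pow_one]
    obtain ⟨q, rfl⟩ := Nat.exists_eq_add_of_lt hp3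
    grind
  rw [htot]
  have hl2 : p - 3 + 2 = p - 1 := by omega
  have hl := not_dvd_two_pow_sub_one hp3 (k := p - 3) hl2.symm.dvd
  have hk := not_dvd_two_pow_sub_one hp3 (k := p - 3 + (p - 1) * (p - 1))
    (by simp [add_right_comm _ _ 2, hl2])
  obtain ⟨a, ha⟩ := dvd_sum_range_pow hp2 hl
  obtain ⟨b, hb⟩ := dvd_sum_range_pow hp2 hk
  have hl1 : 1 < p - 3 := by
    have := hp.out.five_le_of_ne_two_of_ne_three hp2 (by omega)
    omega
  obtain ⟨c, hc⟩ := (mul_sum_range_pow_modEq hp2 hl1 (Nat.le_add_right _ ((p - 1) * (p - 1)))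
    (by simp) hl).dvd
  push_cast [Nat.cast_sub hp3.le, Nat.cast_sub hp.out.one_le] at hc
  refine Int.modEq_iff_dvd.2 ⟨-c + (p - 1) * a - b, ?_⟩
  linear_combination -hc + (p ^ 2 - p : ℤ) * ha - p * hb

end PowerSums

section InverseSums

variable {p : ℕ} [hp : Fact p.Prime]

lemma ratCongr_sum_range_pow {n : ℕ} (hn : n + 1 < p) :
    ratCongr p 2 (∑ k ∈ range p, (k : ℚ) ^ n) (p * bernoulli n) := by
  have hinv : ((n + 1 : ℕ) : ℚ)⁻¹ ∈ pIntegers p :=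
    inv_natCast_mem_pIntegers_of_lt n.succ_pos hn
  have hlow : ∀ i ∈ range n, ratCongr p 2
      (bernoulli i * ((n + 1).choose i) * (p : ℚ) ^ (n + 1 - i) / (n + 1)) 0 := fun i hi => by
    have hi := mem_range.1 hi
    refine ratCongr.iff_exists_mem.2 ⟨bernoulli i * ((n + 1).choose i) * p ^ (n - 1 - i) *
      ((n + 1 : ℕ) : ℚ)⁻¹, ?_, ?_⟩
    · exact mul_mem (mul_mem (mul_mem (bernoulli_mem_pIntegers (by omega)) (natCast_mem _ _))
        (pow_mem (natCast_mem _ _) _)) hinv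
    · rw [show n + 1 - i = n - 1 - i + 2 by omega, Nat.cast_succ]
      ring
  have htop : bernoulli n * ((n + 1).choose n) * (p : ℚ) ^ (n + 1 - n) / (n + 1) =
      p * bernoulli n := by
    rw [Nat.choose_succ_self_right, Nat.add_sub_cancel_left, pow_one]
    push_cast
    field_simp
  rw [sum_range_pow, sum_range_succ, htop]
  simpa using (ratCongr.sum hlow).add (.refl (p * bernoulli n))

lemma ratCongr_sum_inv_sq (hp3 : 3 < p) :
    ratCongr p 2 (∑ j ∈ Ico 1 p, ((j : ℚ) ^ 2)⁻¹) (2 / 3 * (p * bernoulli (p - 3))) := by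
  have h3 : (3 : ℚ)⁻¹ ∈ pIntegers p := by
    exact_mod_cast inv_natCast_mem_pIntegers_of_lt three_pos hp3
  have heuler : ratCongr p 2 (∑ j ∈ Ico 1 p, ((j : ℚ) ^ 2)⁻¹)
      (∑ j ∈ range p, (j : ℚ) ^ ((p ^ 2).totient - 2)) := by
    have htot : 2 < (p ^ 2).totient := by
      rw [Nat.totient_prime_pow_succ hp.out, pow_one]
      nlinarith [Nat.sub_add_cancel hp.out.one_le]
    rw [sum_range_eq_add_Ico _ hp.out.pos, Nat.cast_zero, zero_pow (by omega), zero_add]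
    refine ratCongr.sum fun j hj => ratCongr.inv_pow ?_ htot.le
    have hj := mem_Ico.1 hj
    exact Nat.not_dvd_of_pos_of_lt hj.1 hj.2
  have hkummer : ratCongr p 2 (3 * ∑ j ∈ range p, (j : ℚ) ^ ((p ^ 2).totient - 2))
      (2 * ∑ j ∈ range p, (j : ℚ) ^ (p - 3)) := by
    exact_mod_cast ratCongr.of_intModEq (three_mul_sum_range_pow_modEq hp3)
  have hfaulhaber := (ratCongr_sum_range_pow (by omega : p - 3 + 1 < p)).mul_left (natCast_mem _ 2)
  have h := (hkummer.trans hfaulhaber).mul_left h3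
  refine heuler.trans ?_
  convert h using 1 <;> push_cast <;> ring

lemma ratCongr_sum_inv_mul_sub {m : ℕ} (hpm : p = 2 * m + 1) (hp3 : 3 < p) :
    ratCongr p 2 (∑ j ∈ Ico 1 (m + 1), ((j : ℚ) * (p - j))⁻¹)
      (-(1 / 3) * (p * bernoulli (p - 3))) := by
  have hpair : ratCongr p 2 (∑ j ∈ Ico 1 p, ((j : ℚ) ^ 2)⁻¹)
      (∑ j ∈ Ico 1 (m + 1), -2 * ((j : ℚ) * (p - j))⁻¹) := by
    rw [show Ico 1 p = Ico 1 (2 * m + 1) by rw [hpm], sum_Ico_one_two_mul_add_one]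
    refine ratCongr.sum fun j hj => ?_
    have hj := mem_Ico.1 hj
    have hmem := inv_mul_sub_mem_pIntegers hj.1 (by omega : j < p)
    refine ratCongr.iff_exists_mem.2 ⟨_, pow_mem hmem 2, ?_⟩
    have hj0 : (j : ℚ) ≠ 0 := Nat.cast_ne_zero.2 (by omega)
    have hpj : (p - j : ℚ) ≠ 0 := sub_ne_zero.2 (Nat.cast_injective.ne (by omega))
    rw [← hpm, Nat.cast_sub (by omega)]
    field_simp
    ring
  rw [← mul_sum] at hpair
  have h := (hpair.symm.trans (ratCongr_sum_inv_sq hp3)).mul_left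
    (neg_mem (inv_two_mem_pIntegers (by omega)))
  convert h using 1 <;> ring

end InverseSums

/-- The product `∏ (1 + n² x / (j (n - j)))` over the pairs `{j, n - j}` of nonzero residues modulo
`n = 2m + 1`, in terms of which both binomial coefficients factor. -/
def pairProd (m : ℕ) (x : ℚ) : ℚ :=
  ∏ j ∈ Ico 1 (m + 1), (1 + (2 * m + 1) ^ 2 * (x * ((j : ℚ) * (2 * m + 1 - j))⁻¹))

section Congruences

variable {p : ℕ} [hp : Fact p.Prime] {m : ℕ} {x y : ℚ}

lemma pairProd_congr (hpm : p = 2 * m + 1) (hp3 : 3 < p) (hx : x ∈ pIntegers p) :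
    ratCongr p 4 (pairProd m x) (1 + (p : ℚ) ^ 3 * (-(x / 3) * bernoulli (p - 3))) := by
  have hpm' : (2 * m + 1 : ℚ) = p := by exact_mod_cast hpm.symm
  rw [pairProd, hpm']
  refine (ratCongr.prod_one_add _ fun j hj => ?_).trans ?_
  · have hj := mem_Ico.1 hj
    exact mul_mem hx (inv_mul_sub_mem_pIntegers hj.1 (by omega))
  · rw [← mul_sum]
    have h := ((ratCongr_sum_inv_mul_sub hpm hp3).mul_left hx).pow_mul_left 2
    convert (ratCongr.refl 1).add h using 1
    ring

lemma neg_div_three_mul_bernoulli_mem_pIntegers (hp3 : 3 < p) (hx : x ∈ pIntegers p) :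
    -(x / 3) * bernoulli (p - 3) ∈ pIntegers p := by
  have h3 : (3 : ℚ)⁻¹ ∈ pIntegers p := by
    exact_mod_cast inv_natCast_mem_pIntegers_of_lt three_pos hp3
  rw [div_eq_mul_inv]
  exact mul_mem (neg_mem (mul_mem hx h3)) (bernoulli_mem_pIntegers (by omega))

lemma pairProd_mul_pairProd_congr (hpm : p = 2 * m + 1) (hp3 : 3 < p) (hx : x ∈ pIntegers p)
    (hy : y ∈ pIntegers p) :
    ratCongr p 4 (pairProd m x * pairProd m y)
      (1 + (p : ℚ) ^ 3 * (-((x + y) / 3) * bernoulli (p - 3))) := by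
  have hx' := neg_div_three_mul_bernoulli_mem_pIntegers hp3 hx
  have hy' := neg_div_three_mul_bernoulli_mem_pIntegers hp3 hy
  have hp' : (p : ℚ) ∈ pIntegers p := natCast_mem _ p
  refine ((pairProd_congr hpm hp3 hx).mul ?_ ?_ (pairProd_congr hpm hp3 hy)).trans
    (ratCongr.iff_exists_mem.2 ⟨_, mul_mem (pow_mem hp' 2) (mul_mem hx' hy'), ?_⟩)
  · exact add_mem (one_mem _) (mul_mem (pow_mem hp' 3) hx')
  · exact add_mem (one_mem _) (mul_mem (pow_mem hp' 3) hy')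
  · ring

end Congruences

section Binomial

lemma choose_add_eq_prod_Ico (n k : ℕ) :
    ((n + k).choose k : ℚ) = ∏ j ∈ Ico 1 (k + 1), (1 + (n : ℚ) / j) := by
  induction k with
  | zero => simp
  | succ k ih =>
    have h : ((n + k + 1 : ℕ) : ℚ) * (n + k).choose k =
        (n + k + 1).choose (k + 1) * ((k + 1 : ℕ) : ℚ) := by
      exact_mod_cast Nat.add_one_mul_choose_eq (n + k) k
    rw [prod_Ico_succ_top (by omega), ← ih, ← add_assoc]
    push_cast at h ⊢
    field_simp
    linear_combination -h

lemma choose_four_mul_add_one_eq_pairProd (m : ℕ) :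
    ((2 * m + 1 + 2 * m).choose (2 * m) : ℚ) = pairProd m 2 := by
  rw [choose_add_eq_prod_Ico, prod_Ico_one_two_mul_add_one, pairProd]
  refine prod_congr rfl fun j hj => ?_
  have hj := mem_Ico.1 hj
  have hj0 : (j : ℚ) ≠ 0 := Nat.cast_ne_zero.2 (by omega)
  have hj' : (2 * m + 1 - j : ℚ) ≠ 0 :=
    sub_ne_zero.2 (by exact_mod_cast (by omega : 2 * m + 1 ≠ j))
  rw [Nat.cast_sub (by omega)]
  push_cast
  field_simp
  ring

lemma factorial_mul_centralBinom (m : ℕ) :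
    m.factorial * m.centralBinom = 2 ^ m * ∏ i ∈ range m, (2 * i + 1) := by
  induction m with
  | zero => simp
  | succ m ih =>
    rw [Nat.factorial_succ, mul_right_comm, Nat.succ_mul_centralBinom_succ, prod_range_succ]
    linear_combination 2 * (2 * m + 1) * ih

lemma prod_Ico_mul_sub_eq_factorial (m : ℕ) :
    ∏ j ∈ Ico 1 (m + 1), ((j : ℚ) * (2 * m + 1 - j)) = (2 * m).factorial := by
  rw [← prod_Ico_id_eq_factorial, Nat.cast_prod, prod_Ico_one_two_mul_add_one]
  refine prod_congr rfl fun j hj => ?_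
  rw [Nat.cast_sub (by grind)]
  push_cast
  rfl

lemma prod_Ico_sub_two_mul (m : ℕ) :
    ∏ j ∈ Ico 1 (m + 1), (2 * m + 1 - 2 * j : ℚ) = ∏ i ∈ range m, (2 * i + 1 : ℚ) := by
  refine prod_nbij' (m - ·) (m - ·) (by grind) (by grind) (by grind) (by grind) fun j hj => ?_
  rw [Nat.cast_sub (by grind)]
  ring

lemma centralBinom_eq_pairProd (m : ℕ) :
    (m.centralBinom : ℚ) = (-16) ^ m * pairProd m (-(1 / 4)) := by
  have hterm : ∀ j ∈ Ico 1 (m + 1),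
      1 + (2 * m + 1) ^ 2 * (-(1 / 4) * ((j : ℚ) * (2 * m + 1 - j))⁻¹) =
        -(1 / 4) * (2 * m + 1 - 2 * j) ^ 2 / (j * (2 * m + 1 - j)) := fun j hj => by
    have hj := mem_Ico.1 hj
    have hj0 : (j : ℚ) ≠ 0 := Nat.cast_ne_zero.2 (by omega)
    have hj' : (2 * m + 1 - j : ℚ) ≠ 0 :=
      sub_ne_zero.2 (by exact_mod_cast (by omega : 2 * m + 1 ≠ j))
    field_simp
    ring
  have hodd : (m.factorial : ℚ) * m.centralBinom = 2 ^ m * ∏ i ∈ range m, (2 * i + 1 : ℚ) := by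
    exact_mod_cast factorial_mul_centralBinom m
  have hfact : (m.centralBinom : ℚ) * (m.factorial * m.factorial) = (2 * m).factorial := by
    have h := Nat.choose_mul_factorial_mul_factorial (by omega : m ≤ 2 * m)
    rw [← Nat.centralBinom_eq_two_mul_choose, show 2 * m - m = m by omega, mul_assoc] at h
    exact_mod_cast h
  rw [pairProd, prod_congr rfl hterm, prod_div_distrib, prod_mul_distrib, prod_pow,
    prod_Ico_sub_two_mul, prod_Ico_mul_sub_eq_factorial, prod_const, Nat.card_Ico,
    Nat.add_sub_cancel, mul_div_assoc', eq_div_iff (by positivity), ← hfact, ← mul_assoc (_ ^ m),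
    ← mul_pow, show (-16 : ℚ) * -(1 / 4) = 2 ^ 2 by norm_num, pow_right_comm, ← mul_pow, ← hodd]
  ring

end Binomial

lemma F_self (m : ℕ) :
    F m m = (-1) ^ m * (2 * m + 1) * (pairProd m 2 * pairProd m (-(1 / 4))) / 4 ^ m := by
  have : (m.centralBinom : ℚ) ≠ 0 := Nat.cast_ne_zero.2 m.centralBinom_ne_zero
  have hchoose : ((2 * m + 2 * m).choose (2 * m) : ℚ) * (4 * m + 1) =
      (2 * m + 1 + 2 * m).choose (2 * m) * (2 * m + 1) := by
    have h := Nat.choose_mul_succ_eq (2 * m + 2 * m) (2 * m)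
    rw [show 2 * m + 2 * m + 1 - 2 * m = 2 * m + 1 by omega,
      show 2 * m + 2 * m + 1 = 2 * m + 1 + 2 * m by omega] at h
    push_cast [← @Nat.cast_inj ℚ] at h
    linear_combination h
  have hpow : (2 : ℚ) ^ (8 * m - 2 * m) = 4 ^ m * 16 ^ m := by
    rw [show 8 * m - 2 * m = 6 * m by omega, pow_mul, ← mul_pow]
    norm_num
  have hcentral := centralBinom_eq_pairProd m
  rw [show (-16 : ℚ) = -1 * 16 by norm_num, mul_pow] at hcentral
  rw [F, if_pos le_rfl, hpow, ← two_mul m, Nat.sub_self, Nat.sub_self, Nat.choose_self,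
    ← Nat.centralBinom_eq_two_mul_choose, ← choose_four_mul_add_one_eq_pairProd]
  field_simp
  push_cast
  linear_combination m.centralBinom * hchoose +
    (2 * m + 1) * ((2 * m + 1 + 2 * m).choose (2 * m) : ℚ) * hcentral

section FermatQuotient

variable {p : ℕ} [hp : Fact p.Prime]

lemma two_pow_eq_one_add_mul_fermatQ : (2 : ℚ) ^ (p - 1) = 1 + p * fermatQ p := by
  rw [fermatQ, mul_div_cancel₀ _ (Nat.cast_ne_zero.2 hp.out.ne_zero), add_sub_cancel]

lemma fermatQ_mem_pIntegers (hp2 : p ≠ 2) : fermatQ p ∈ pIntegers p := by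
  obtain ⟨z, hz⟩ := (two_pow_prime_sub_one_modEq_one hp2).symm.dvd
  have hz' : (2 : ℚ) ^ (p - 1) - 1 = p * z := by exact_mod_cast hz
  rw [fermatQ, hz', mul_div_cancel_left₀ _ (Nat.cast_ne_zero.2 hp.out.ne_zero)]
  exact intCast_mem _ z

lemma inv_two_pow_mem_pIntegers (hp2 : p ≠ 2) : ((2 : ℚ) ^ (p - 1))⁻¹ ∈ pIntegers p :=
  inv_pow (2 : ℚ) (p - 1) ▸ pow_mem (inv_two_mem_pIntegers hp2) _

lemma ratCongr_inv_two_pow (hp2 : p ≠ 2) (r : ℕ) :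
    ratCongr p r ((2 : ℚ) ^ (p - 1))⁻¹ (∑ i ∈ range r, (-(p * fermatQ p)) ^ i) := by
  refine ratCongr.iff_exists_mem.2 ⟨((2 : ℚ) ^ (p - 1))⁻¹ * (-fermatQ p) ^ r,
    mul_mem (inv_two_pow_mem_pIntegers hp2) (pow_mem (neg_mem (fermatQ_mem_pIntegers hp2)) r), ?_⟩
  have hgeom := mul_neg_geom_sum (-(p * fermatQ p)) r
  rw [sub_neg_eq_add, ← two_pow_eq_one_add_mul_fermatQ, neg_mul_eq_mul_neg] at hgeom
  have hcancel : ((2 : ℚ) ^ (p - 1))⁻¹ * 2 ^ (p - 1) = 1 := inv_mul_cancel₀ (by positivity)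
  simp only [neg_mul_eq_mul_neg]
  linear_combination (∑ i ∈ range r, (p * -fermatQ p) ^ i) * hcancel -
    ((2 : ℚ) ^ (p - 1))⁻¹ * hgeom

end FermatQuotient

theorem F_half_half_congr (p : ℕ) (hp : p.Prime) (hp3 : 3 < p) :
    ratCongr p 5 (F ((p - 1) / 2) ((p - 1) / 2))
      ((-1 : ℚ) ^ ((p - 1) / 2) * p *
        (1 - p * fermatQ p + (p : ℚ) ^ 2 * fermatQ p ^ 2 - (p : ℚ) ^ 3 * fermatQ p ^ 3 -
          (7 / 12) * (p : ℚ) ^ 3 * bernoulli (p - 3))) := by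
  have := Fact.mk hp
  obtain ⟨m, hpm⟩ := hp.odd_of_ne_two (by omega)
  have hp2 : p ≠ 2 := by omega
  have htwo : (2 : ℚ) ^ (p - 1) = 4 ^ m := by
    rw [show p - 1 = 2 * m by omega, pow_mul]
    norm_num
  have hquarter : -(1 / 4 : ℚ) ∈ pIntegers p := by
    rw [one_div]
    exact neg_mem (by exact_mod_cast inv_natCast_mem_pIntegers_of_lt four_pos (by omega))
  have hprod := (pairProd_mul_pairProd_congr hpm hp3 (ofNat_mem _ 2) hquarter).mul_left
    (inv_two_pow_mem_pIntegers hp2)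
  have hB := neg_div_three_mul_bernoulli_mem_pIntegers hp3 (add_mem (ofNat_mem _ 2) hquarter)
  have hone : ratCongr p 1 ((2 : ℚ) ^ (p - 1))⁻¹ 1 := by simpa using ratCongr_inv_two_pow hp2 1
  have hsum := (hprod.trans (hone.mul_one_add_pow_mul hB)).trans
    ((ratCongr_inv_two_pow hp2 4).add (.refl _))
  have hmul := (hsum.pow_mul_left 1).mul_left (pow_mem (neg_mem (one_mem (pIntegers p))) m)
  rw [show (p - 1) / 2 = m by omega, F_self]
  convert hmul using 1
  · rw [htwo, hpm]
    push_cast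
    ring
  · simp only [sum_range_succ, sum_range_zero]
    ring
end
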